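/- arXiv:2605.13882 — 3 statements merged into one kernel-verified Lean document; each statement's English description precedes it below -/
import Mathlib

section
/- The integral R_C(0, 2/5) = ∫_0^∞ cos(2πx/5)/(exp(2π√x) − 1) dx converges and equals (8 − 3√5)/16. -/
open MeasureTheory Real Set Filter Topology

namespace RC

lemma exp_neg_abs_le (x : ℝ) : Real.exp (-|x|) ≤ 2 * (1 + x ^ 2)⁻¹ := by
  have h := Real.quadratic_le_exp_of_nonneg (abs_nonneg x)
  rw [Real.exp_neg, ← div_eq_mul_inv, inv_eq_one_div, div_le_div_iff₀ (Real.exp_pos _) (by positivity)]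
  rw [sq_abs] at h
  nlinarith [abs_nonneg x]

lemma intg (h : ℝ → ℂ) (hc : Continuous h) (C : ℝ)
    (hb : ∀ x, 2 ≤ |x| → ‖h x‖ ≤ C * Real.exp (-|x|)) : Integrable h := by
  have hint : Integrable (fun x : ℝ => (1 + x ^ 2)⁻¹) := integrable_inv_one_add_sq
  have key : ∀ x, 2 ≤ |x| → ‖h x‖ ≤ (|C| * 2) * ‖(1 + x ^ 2)⁻¹‖ := by
    intro x hx
    have h1 := hb x hx
    have h2 := exp_neg_abs_le x
    have h3 : C * Real.exp (-|x|) ≤ |C| * Real.exp (-|x|) :=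
      mul_le_mul_of_nonneg_right (le_abs_self C) (Real.exp_pos _).le
    have h4 : |C| * Real.exp (-|x|) ≤ |C| * (2 * (1 + x ^ 2)⁻¹) :=
      mul_le_mul_of_nonneg_left h2 (abs_nonneg C)
    rw [Real.norm_of_nonneg (by positivity)]
    linarith
  refine hc.locallyIntegrable.integrable_of_isBigO_atBot_atTop (g := fun x : ℝ => (1 + x ^ 2)⁻¹)
    (g' := fun x : ℝ => (1 + x ^ 2)⁻¹) ?_ (hint.integrableAtFilter _) ?_ (hint.integrableAtFilter _)
  · refine Asymptotics.IsBigO.of_bound (|C| * 2) ?_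
    filter_upwards [eventually_le_atBot (-2 : ℝ)] with x hx
    exact key x (by rw [abs_of_nonpos (by linarith)]; linarith)
  · refine Asymptotics.IsBigO.of_bound (|C| * 2) ?_
    filter_upwards [eventually_ge_atTop (2 : ℝ)] with x hx
    exact key x (by rw [abs_of_nonneg (by linarith)]; linarith)

lemma rect_tendsto (g : ℂ → ℂ) (a b : ℝ) (hab : a ≤ b)
    (H : DifferentiableOn ℂ g {z | a ≤ z.im ∧ z.im ≤ b}) (B : ℝ → ℝ) (hB : Tendsto B atTop (𝓝 0))
    (hb : ∀ z : ℂ, a ≤ z.im → z.im ≤ b → 2 ≤ |z.re| → ‖g z‖ ≤ B |z.re|) :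
    Tendsto (fun R : ℝ => (∫ x in (-R)..R, g (x + a * Complex.I)) -
      ∫ x in (-R)..R, g (x + b * Complex.I)) atTop (𝓝 0) := by
  have h0 : Tendsto (fun R : ℝ => 2 * (B R * |b - a|)) atTop (𝓝 0) := by
    simpa using (hB.mul_const |b - a|).const_mul 2
  refine squeeze_zero_norm' ?_ h0
  filter_upwards [eventually_ge_atTop (2 : ℝ)] with R hR
  have h := Complex.integral_boundary_rect_eq_zero_of_differentiableOn g
    (⟨-R, a⟩ : ℂ) (⟨R, b⟩ : ℂ) (H.mono (by
      intro z hz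
      have := hz.2
      simp only [uIcc_of_le hab] at this
      exact this))
  simp only at h
  have e1 : ‖∫ y in a..b, g ((R : ℂ) + y * Complex.I)‖ ≤ B R * |b - a| := by
    refine intervalIntegral.norm_integral_le_of_norm_le_const ?_
    intro y hy
    rw [uIoc_of_le hab] at hy
    have := hb (R + y * Complex.I) (by simpa using hy.1.le) (by simpa using hy.2)
      (by simpa using le_trans hR (le_abs_self R))
    simpa [abs_of_nonneg (by linarith : (0:ℝ) ≤ R)] using this
  have e2 : ‖∫ y in a..b, g (((-R : ℝ) : ℂ) + y * Complex.I)‖ ≤ B R * |b - a| := by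
    refine intervalIntegral.norm_integral_le_of_norm_le_const ?_
    intro y hy
    rw [uIoc_of_le hab] at hy
    have := hb (((-R : ℝ) : ℂ) + y * Complex.I) (by simpa using hy.1.le) (by simpa using hy.2)
      (by simpa using le_trans hR (le_abs_self R))
    simpa [abs_of_nonneg (by linarith : (0:ℝ) ≤ R)] using this
  have h' : (∫ x in (-R)..R, g (x + a * Complex.I)) - (∫ x in (-R)..R, g (x + b * Complex.I))
      = Complex.I • (∫ y in a..b, g (((-R : ℝ) : ℂ) + y * Complex.I)) -
        Complex.I • ∫ y in a..b, g ((R : ℂ) + y * Complex.I) := by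
    linear_combination h
  rw [h']
  refine (norm_sub_le _ _).trans ?_
  rw [norm_smul, norm_smul, Complex.norm_I, one_mul, one_mul]
  linarith

lemma cont_line (g : ℂ → ℂ) (a b c : ℝ) (hac : a ≤ c) (hcb : c ≤ b)
    (H : DifferentiableOn ℂ g {z | a ≤ z.im ∧ z.im ≤ b}) :
    Continuous (fun x : ℝ => g (x + c * Complex.I)) := by
  have := H.continuousOn.comp_continuous (f := fun x : ℝ => (x : ℂ) + c * Complex.I) (by fun_prop)
    (by intro x; simp [hac, hcb])
  exact this

lemma strip (g : ℂ → ℂ) (a b : ℝ) (hab : a ≤ b)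
    (H : DifferentiableOn ℂ g {z | a ≤ z.im ∧ z.im ≤ b}) (C : ℝ)
    (hb : ∀ z : ℂ, a ≤ z.im → z.im ≤ b → 2 ≤ |z.re| → ‖g z‖ ≤ C * Real.exp (-|z.re|)) :
    Integrable (fun x : ℝ => g (x + a * Complex.I)) ∧
    Integrable (fun x : ℝ => g (x + b * Complex.I)) ∧
    ∫ x : ℝ, g (x + a * Complex.I) = ∫ x : ℝ, g (x + b * Complex.I) := by
  have i1 : Integrable (fun x : ℝ => g (x + a * Complex.I)) :=
    intg _ (cont_line g a b a le_rfl hab H) C (fun x hx => by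
      simpa using hb (x + a * Complex.I) (by simp) (by simpa using hab) (by simpa using hx))
  have i2 : Integrable (fun x : ℝ => g (x + b * Complex.I)) :=
    intg _ (cont_line g a b b hab le_rfl H) C (fun x hx => by
      simpa using hb (x + b * Complex.I) (by simpa using hab) (by simp) (by simpa using hx))
  refine ⟨i1, i2, ?_⟩
  have t1 := rect_tendsto g a b hab H (fun R => C * Real.exp (-R)) (by
    simpa using (Real.tendsto_exp_neg_atTop_nhds_zero).const_mul C) hb
  have t2 := (intervalIntegral_tendsto_integral i1 tendsto_neg_atTop_atBot tendsto_id).sub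
    (intervalIntegral_tendsto_integral i2 tendsto_neg_atTop_atBot tendsto_id)
  exact sub_eq_zero.1 (tendsto_nhds_unique t2 t1)

lemma integral_inv_diff : Integrable (fun x : ℝ => (1 / ((x : ℂ) + ((-(1/4) : ℝ) : ℂ) * Complex.I)
      - 1 / ((x : ℂ) + ((1/4 : ℝ) : ℂ) * Complex.I))) ∧
    ∫ x : ℝ, (1 / ((x : ℂ) + ((-(1/4) : ℝ) : ℂ) * Complex.I)
      - 1 / ((x : ℂ) + ((1/4 : ℝ) : ℂ) * Complex.I)) = 2 * π * Complex.I := by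
  have e : ∀ x : ℝ, (1 / ((x : ℂ) + ((-(1/4) : ℝ) : ℂ) * Complex.I)
      - 1 / ((x : ℂ) + ((1/4 : ℝ) : ℂ) * Complex.I)) = (8 * Complex.I) * (((1 + (4 * x) ^ 2)⁻¹ : ℝ) : ℂ) := by
    intro x
    have h1 : (x : ℂ) + ((-(1/4) : ℝ) : ℂ) * Complex.I ≠ 0 := by
      intro h; have := congrArg Complex.im h; norm_num at this
    have h2 : (x : ℂ) + ((1/4 : ℝ) : ℂ) * Complex.I ≠ 0 := by
      intro h; have := congrArg Complex.im h; norm_num at this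
    have h3 : ((1 + (4 * x) ^ 2 : ℝ) : ℂ) ≠ 0 := by
      exact_mod_cast (by positivity : (1 + (4 * x) ^ 2 : ℝ) ≠ 0)
    push_cast at h1 h2 h3 ⊢
    rw [div_sub_div _ _ h1 h2, ← div_eq_mul_inv, div_eq_div_iff (mul_ne_zero h1 h2) h3]
    ring_nf
    simp only [show Complex.I ^ 3 = -Complex.I by rw [pow_succ, Complex.I_sq]; ring]
    ring
  simp_rw [e]
  constructor
  · have : Integrable (fun x : ℝ => (1 + (4 * x) ^ 2)⁻¹) :=
      integrable_inv_one_add_sq.comp_mul_left' (by norm_num)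
    exact (this.ofReal (𝕜 := ℂ)).const_mul _
  · rw [integral_const_mul, integral_complex_ofReal,
      Measure.integral_comp_mul_left (fun x : ℝ => (1 + x ^ 2)⁻¹), integral_univ_inv_one_add_sq]
    norm_num
    ring

lemma residue (u : ℂ → ℂ) (H : DifferentiableOn ℂ u {z | -(1/2) < z.im ∧ z.im < 1/2}) (C : ℝ)
    (hb : ∀ z : ℂ, -(1/4) ≤ z.im → z.im ≤ 1/4 → 2 ≤ |z.re| → ‖u z / z‖ ≤ C * Real.exp (-|z.re|)) :
    (∫ x : ℝ, u (x + (-(1/4) : ℝ) * Complex.I) / (x + (-(1/4) : ℝ) * Complex.I)) -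
      ∫ x : ℝ, u (x + (1/4 : ℝ) * Complex.I) / (x + (1/4 : ℝ) * Complex.I) =
      2 * π * Complex.I * u 0 := by
  have hopen : IsOpen {z : ℂ | -(1/2) < z.im ∧ z.im < 1/2} :=
    (isOpen_lt continuous_const Complex.continuous_im).inter
      (isOpen_lt Complex.continuous_im continuous_const)
  have Hd : DifferentiableOn ℂ (dslope u 0) {z | -(1/2) < z.im ∧ z.im < 1/2} :=
    (Complex.differentiableOn_dslope (hopen.mem_nhds (by norm_num))).2 H
  have ds : ∀ z : ℂ, z ≠ 0 → dslope u 0 z = u z / z - u 0 * (1 / z) := by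
    intro z hz
    rw [dslope_of_ne _ hz, slope_def_field]
    field_simp
    ring
  have hsub : {z : ℂ | -(1/4) ≤ z.im ∧ z.im ≤ 1/4} ⊆ {z : ℂ | -(1/2) < z.im ∧ z.im < 1/2} := by
    intro z hz
    exact ⟨by linarith [hz.1], by linarith [hz.2]⟩
  have ne : ∀ (c : ℝ), c ≠ 0 → ∀ x : ℝ, (x : ℂ) + c * Complex.I ≠ 0 := by
    intro c hc x h
    have := congrArg Complex.im h
    simp at this; exact hc this
  have t1 := rect_tendsto (dslope u 0) (-(1/4)) (1/4) (by norm_num) (Hd.mono hsub)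
    (fun R => C * Real.exp (-R) + ‖u 0‖ * R⁻¹) (by
      simpa using ((Real.tendsto_exp_neg_atTop_nhds_zero).const_mul C).add
        (tendsto_inv_atTop_zero.const_mul ‖u 0‖)) (by
      intro z h1 h2 h3
      have hz : z ≠ 0 := by rintro rfl; norm_num at h3
      rw [ds z hz]
      refine (norm_sub_le _ _).trans (add_le_add (hb z h1 h2 h3) ?_)
      rw [norm_mul, norm_div, norm_one, one_div]
      gcongr
      exact Complex.abs_re_le_norm z)
  have cl : ∀ c : ℝ, c ≠ 0 → -(1/4) ≤ c → c ≤ 1/4 →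
      Integrable (fun x : ℝ => u (x + c * Complex.I) / (x + c * Complex.I)) := by
    intro c hc h1 h2
    refine intg _ ?_ C ?_
    · refine Continuous.div (cont_line u (-(1/4)) (1/4) c h1 h2 (H.mono hsub)) (by fun_prop) (ne c hc)
    · intro x hx
      simpa using hb (x + c * Complex.I) (by simpa using h1) (by simpa using h2) (by simpa using hx)
  have i1 := cl (-(1/4)) (by norm_num) le_rfl (by norm_num)
  have i2 := cl (1/4) (by norm_num) (by norm_num) le_rfl
  obtain ⟨i3, v3⟩ := integral_inv_diff
  have t2 := ((intervalIntegral_tendsto_integral i1 tendsto_neg_atTop_atBot tendsto_id).sub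
    (intervalIntegral_tendsto_integral i2 tendsto_neg_atTop_atBot tendsto_id)).sub
    ((intervalIntegral_tendsto_integral i3 tendsto_neg_atTop_atBot tendsto_id).const_mul (u 0))
  rw [v3] at t2
  have cinv : ∀ c : ℝ, c ≠ 0 → Continuous (fun x : ℝ => 1 / ((x : ℂ) + c * Complex.I)) := by
    intro c hc
    exact Continuous.div continuous_const (by fun_prop) (ne c hc)
  have c1 := cinv (-(1/4)) (by norm_num)
  have c2 := cinv (1/4) (by norm_num)
  have t3 := t2.congr (f₂ := fun R : ℝ => (∫ x in (-R)..R, dslope u 0 (x + (-(1/4) : ℝ) * Complex.I)) -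
      ∫ x in (-R)..R, dslope u 0 (x + (1/4 : ℝ) * Complex.I)) (by
    intro R
    simp_rw [ds _ (ne (-(1/4)) (by norm_num) _), ds _ (ne (1/4) (by norm_num) _)]
    simp only [id]
    rw [intervalIntegral.integral_sub i1.intervalIntegrable
        ((c1.intervalIntegrable _ _).const_mul (u 0)),
      intervalIntegral.integral_sub i2.intervalIntegrable
        ((c2.intervalIntegrable _ _).const_mul (u 0)),
      intervalIntegral.integral_sub (c1.intervalIntegrable _ _) (c2.intervalIntegrable _ _),
      intervalIntegral.integral_const_mul, intervalIntegral.integral_const_mul]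
    ring)
  have := tendsto_nhds_unique t3 t1
  linear_combination this

def Nice (f : ℂ → ℂ) : Prop := Differentiable ℂ f ∧
  ∀ M N : ℝ, ∃ C : ℝ, 0 ≤ C ∧ ∀ z : ℂ, |z.im| ≤ M → ‖f z‖ ≤ C * Real.exp (-(N * |z.re|))

lemma Nice.gauss {a : ℝ} (ha : 0 < a) : Nice (fun z => Complex.exp (-(a : ℂ) * z ^ 2)) := by
  refine ⟨by fun_prop, fun M N => ⟨Real.exp (a * M ^ 2 + N ^ 2 / (4 * a)), (Real.exp_pos _).le, ?_⟩⟩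
  intro z hz
  rw [Complex.norm_exp, ← Real.exp_add, Real.exp_le_exp]
  have : (-(a : ℂ) * z ^ 2).re = -a * (z.re ^ 2 - z.im ^ 2) := by
    simp [sq, Complex.mul_re]
  rw [this]
  have h1 : z.im ^ 2 ≤ M ^ 2 := sq_le_sq' (by linarith [neg_abs_le z.im]) (by linarith [le_abs_self z.im])
  have h2 : 0 ≤ a * (|z.re| - N / (2 * a)) ^ 2 := by positivity
  have h3 : a * (|z.re| - N / (2 * a)) ^ 2 = a * z.re ^ 2 - N * |z.re| + N ^ 2 / (4 * a) := by
    rw [← sq_abs z.re]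
    field_simp
    ring
  nlinarith

lemma Nice.const_mul {f : ℂ → ℂ} (hf : Nice f) (c : ℂ) : Nice (fun z => c * f z) := by
  refine ⟨hf.1.const_mul c, fun M N => ?_⟩
  obtain ⟨C, hC, h⟩ := hf.2 M N
  refine ⟨‖c‖ * C, by positivity, fun z hz => ?_⟩
  rw [norm_mul, mul_assoc]
  exact mul_le_mul_of_nonneg_left (h z hz) (norm_nonneg _)

lemma Nice.add {f g : ℂ → ℂ} (hf : Nice f) (hg : Nice g) : Nice (fun z => f z + g z) := by
  refine ⟨hf.1.add hg.1, fun M N => ?_⟩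
  obtain ⟨C, hC, h⟩ := hf.2 M N
  obtain ⟨C', hC', h'⟩ := hg.2 M N
  refine ⟨C + C', by positivity, fun z hz => ?_⟩
  rw [add_mul]
  exact (norm_add_le _ _).trans (add_le_add (h z hz) (h' z hz))

lemma Nice.exp_mul {f : ℂ → ℂ} (hf : Nice f) (b : ℂ) : Nice (fun z => Complex.exp (b * z) * f z) := by
  refine ⟨by have := hf.1; fun_prop, fun M N => ?_⟩
  obtain ⟨C, hC, h⟩ := hf.2 M (N + |b.re|)
  refine ⟨Real.exp (|b.im| * M) * C, by positivity, fun z hz => ?_⟩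
  rw [norm_mul, Complex.norm_exp]
  have h1 : (b * z).re ≤ |b.im| * M + |b.re| * |z.re| := by
    rw [Complex.mul_re]
    have e1 : b.re * z.re ≤ |b.re| * |z.re| := by rw [← abs_mul]; exact le_abs_self _
    have e2 : -(b.im * z.im) ≤ |b.im| * |z.im| := by rw [← abs_mul]; exact neg_le_abs _
    have e3 : |b.im| * |z.im| ≤ |b.im| * M := mul_le_mul_of_nonneg_left hz (abs_nonneg _)
    linarith
  calc Real.exp (b * z).re * ‖f z‖
      ≤ Real.exp (|b.im| * M + |b.re| * |z.re|) * (C * Real.exp (-((N + |b.re|) * |z.re|))) :=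
        mul_le_mul (Real.exp_le_exp.2 h1) (h z hz) (norm_nonneg _) (Real.exp_pos _).le
    _ = Real.exp (|b.im| * M) * C *
        (Real.exp (|b.re| * |z.re|) * Real.exp (-((N + |b.re|) * |z.re|))) := by
        rw [Real.exp_add]; ring
    _ = _ := by rw [← Real.exp_add]; congr 2; ring

lemma Nice.id_mul {f : ℂ → ℂ} (hf : Nice f) : Nice (fun z => z * f z) := by
  refine ⟨by have := hf.1; fun_prop, fun M N => ?_⟩
  obtain ⟨C, hC, h⟩ := hf.2 M (N + 1)
  refine ⟨Real.exp (|M|) * C, by positivity, fun z hz => ?_⟩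
  rw [norm_mul]
  have h1 : ‖z‖ ≤ Real.exp (|M| + |z.re|) := by
    have := Complex.norm_le_abs_re_add_abs_im z
    have := Real.add_one_le_exp (|M| + |z.re|)
    have := le_abs_self M
    linarith
  calc ‖z‖ * ‖f z‖
      ≤ Real.exp (|M| + |z.re|) * (C * Real.exp (-((N + 1) * |z.re|))) :=
        mul_le_mul h1 (h z hz) (norm_nonneg _) (Real.exp_pos _).le
    _ = Real.exp (|M|) * C * (Real.exp (|z.re|) * Real.exp (-((N + 1) * |z.re|))) := by
        rw [Real.exp_add]; ring
    _ = _ := by rw [← Real.exp_add]; congr 2; ring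

lemma Nice.shift {f : ℂ → ℂ} (hf : Nice f) (w : ℂ) : Nice (fun z => f (z + w)) := by
  refine ⟨by have := hf.1; fun_prop, fun M N => ?_⟩
  obtain ⟨C, hC, h⟩ := hf.2 (M + |w.im|) |N|
  refine ⟨C * Real.exp (|N| * |w.re|), by positivity, fun z hz => ?_⟩
  refine (h (z + w) ?_).trans ?_
  · rw [Complex.add_im]
    exact (abs_add_le _ _).trans (by linarith)
  · rw [mul_assoc, ← Real.exp_add]
    refine mul_le_mul_of_nonneg_left (Real.exp_le_exp.2 ?_) hC
    have e1 : |z.re| ≤ |(z + w).re| + |w.re| := by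
      have := abs_sub (z + w).re w.re
      rw [Complex.add_re] at *
      simpa using this
    have e2 : |N| * |z.re| ≤ |N| * (|(z + w).re| + |w.re|) := mul_le_mul_of_nonneg_left e1 (abs_nonneg _)
    have e3 : N * |z.re| ≤ |N| * |z.re| := mul_le_mul_of_nonneg_right (le_abs_self N) (abs_nonneg _)
    linarith

lemma Nice.line {f : ℂ → ℂ} (hf : Nice f) (c : ℝ) :
    Integrable (fun x : ℝ => f x) ∧ Integrable (fun x : ℝ => f (x + c * Complex.I)) ∧
    ∫ x : ℝ, f (x + c * Complex.I) = ∫ x : ℝ, f x := by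
  obtain ⟨C, hC, h⟩ := hf.2 |c| 1
  rcases le_total 0 c with h0 | h0
  · have := strip f 0 c h0 hf.1.differentiableOn C (by
      intro z h1 h2 _
      simpa using h z (abs_le_abs h2 (by linarith)))
    simp only [Complex.ofReal_zero, zero_mul, add_zero] at this
    exact ⟨this.1, this.2.1, this.2.2.symm⟩
  · have := strip f c 0 h0 hf.1.differentiableOn C (by
      intro z h1 h2 _
      simpa using h z (by rw [abs_of_nonpos h2, abs_of_nonpos h0]; linarith))
    simp only [Complex.ofReal_zero, zero_mul, add_zero] at this
    exact ⟨this.2.1, this.1, this.2.2⟩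

noncomputable def bb : ℂ := 2 * π * (1 + Complex.I)
noncomputable def pp : ℂ := (1 + Complex.I) / 2
noncomputable def K (z : ℂ) : ℂ := 1 / (Complex.exp (bb * z) - 1)
noncomputable def D : ℂ → ℂ := dslope (fun z => Complex.exp (bb * z) - 1) 0

lemma bb_ne : bb ≠ 0 := by
  intro h
  have := congrArg Complex.re h
  simp [bb, Real.pi_ne_zero] at this

lemma bb_pp : bb * pp = 2 * π * Complex.I := by
  unfold bb pp
  ring_nf
  rw [Complex.I_sq]; ring

lemma D_ne {z : ℂ} (hz : z ≠ 0) : D z = (Complex.exp (bb * z) - 1) / z := by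
  unfold D
  rw [dslope_of_ne _ hz, slope_def_field]
  simp

lemma D_zero : D 0 = bb := by
  unfold D
  rw [dslope_same]
  have : HasDerivAt (fun z => Complex.exp (bb * z) - 1) (Complex.exp (bb * 0) * (bb * 1)) 0 :=
    (((hasDerivAt_id (0:ℂ)).const_mul bb).cexp).sub_const 1
  rw [this.deriv]; simp

lemma E_ne {z : ℂ} (hz : z ≠ 0) (h1 : -(1/2) < z.im) (h2 : z.im < 1/2) :
    Complex.exp (bb * z) - 1 ≠ 0 := by
  intro h
  rw [sub_eq_zero, Complex.exp_eq_one_iff] at h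
  obtain ⟨n, hn⟩ := h
  have : z = n * pp := by
    have := bb_ne
    apply mul_left_cancel₀ bb_ne
    rw [hn, ← bb_pp]; ring
  have him : z.im = n / 2 := by
    rw [this]; simp [pp, Complex.mul_im]; ring
  rw [him] at h1 h2
  have a1 : (-1 : ℝ) < n := by linarith
  have a2 : (n : ℝ) < 1 := by linarith
  have b1 : -1 < n := by exact_mod_cast a1
  have b2 : n < 1 := by exact_mod_cast a2
  have : n = 0 := by omega
  subst this
  apply hz; rw [‹z = _›]; simp

lemma D_ne_zero {z : ℂ} (h1 : -(1/2) < z.im) (h2 : z.im < 1/2) : D z ≠ 0 := by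
  by_cases hz : z = 0
  · rw [hz, D_zero]; exact bb_ne
  · rw [D_ne hz]; exact div_ne_zero (E_ne hz h1 h2) hz

lemma D_diff : Differentiable ℂ D := by
  rw [← differentiableOn_univ]
  unfold D
  rw [Complex.differentiableOn_dslope univ_mem]
  fun_prop

lemma bb_re (z : ℂ) : (bb * z).re = 2 * π * (z.re - z.im) := by
  simp [bb, Complex.mul_re, Complex.mul_im]; ring

lemma K_bound {z : ℂ} (h1 : -(1/4) ≤ z.im) (h2 : z.im ≤ 1/4) (h3 : 2 ≤ |z.re|) : ‖K z‖ ≤ 2 := by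
  have hp := Real.pi_gt_three
  unfold K
  rw [norm_div, norm_one]
  suffices h : 1 / 2 ≤ ‖Complex.exp (bb * z) - 1‖ by
    rw [div_le_iff₀ (by linarith)]; linarith
  have hn : ‖Complex.exp (bb * z)‖ = Real.exp (2 * π * (z.re - z.im)) := by
    rw [Complex.norm_exp, bb_re]
  rcases le_abs'.1 h3 with h | h
  · have e := norm_sub_norm_le (1 : ℂ) (Complex.exp (bb * z))
    rw [norm_one, hn, norm_sub_rev] at e
    have : Real.exp (2 * π * (z.re - z.im)) ≤ 1 / 2 := by
      have q := Real.add_one_le_exp (-(2 * π * (z.re - z.im)))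
      rw [Real.exp_neg] at q
      have : 2 ≤ -(2 * π * (z.re - z.im)) + 1 := by nlinarith
      rw [← inv_inv (Real.exp _), ← one_div]
      exact one_div_le_one_div_of_le (by norm_num) (by linarith)
    linarith
  · have e := norm_sub_norm_le (Complex.exp (bb * z)) (1 : ℂ)
    rw [norm_one, hn] at e
    have q := Real.add_one_le_exp (2 * π * (z.re - z.im))
    nlinarith

lemma fK_bound {f : ℂ → ℂ} (hf : Nice f) : ∃ C : ℝ, ∀ z : ℂ, -(1/4) ≤ z.im → z.im ≤ 1/4 →
    2 ≤ |z.re| → ‖f z * K z‖ ≤ C * Real.exp (-|z.re|) := by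
  obtain ⟨C, hC, h⟩ := hf.2 (1/4) 1
  refine ⟨C * 2, fun z h1 h2 h3 => ?_⟩
  have a := h z (abs_le.2 ⟨by linarith, h2⟩)
  have b := K_bound h1 h2 h3
  rw [norm_mul]
  rw [one_mul] at a
  calc _ ≤ (C * Real.exp (-|z.re|)) * 2 := mul_le_mul a b (norm_nonneg _) (by positivity)
    _ = _ := by ring

lemma fD {f : ℂ → ℂ} (hf : Nice f) :
    DifferentiableOn ℂ (fun z => f z / D z) {z | -(1/2) < z.im ∧ z.im < 1/2} :=
  hf.1.differentiableOn.div D_diff.differentiableOn (fun _ hz => D_ne_zero hz.1 hz.2)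

lemma fDK (f : ℂ → ℂ) {z : ℂ} (hz : z ≠ 0) : f z / D z = z * f z * K z := by
  rw [D_ne hz]; unfold K
  by_cases h : Complex.exp (bb * z) - 1 = 0
  · simp [h]
  · field_simp

lemma line_ne (c : ℝ) (hc : c ≠ 0) (x : ℝ) : (x : ℂ) + c * Complex.I ≠ 0 := by
  intro h
  have := congrArg Complex.im h
  simp at this; exact hc this

lemma pole {f : ℂ → ℂ} (hf : Nice f) :
    (∫ x : ℝ, f (x + (-(1/4) : ℝ) * Complex.I) * K (x + (-(1/4) : ℝ) * Complex.I)) -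
      ∫ x : ℝ, f (x + (1/4 : ℝ) * Complex.I) * K (x + (1/4 : ℝ) * Complex.I) = pp * f 0 := by
  obtain ⟨C, hC⟩ := fK_bound hf
  have e : ∀ z : ℂ, z ≠ 0 → (f z / D z) / z = f z * K z := by
    intro z hz
    rw [fDK f hz]; field_simp
  have := residue (fun z => f z / D z) (fD hf) C (by
    intro z h1 h2 h3
    have hz : z ≠ 0 := by rintro rfl; norm_num at h3
    rw [e z hz]; exact hC z h1 h2 h3)
  simp_rw [e _ (line_ne (-(1/4)) (by norm_num) _), e _ (line_ne (1/4) (by norm_num) _)] at this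
  rw [this, D_zero, ← bb_pp]
  have := bb_ne
  field_simp

lemma K_int {f : ℂ → ℂ} (hf : Nice f) :
    Integrable (fun x : ℝ => f (x + (-(1/4) : ℝ) * Complex.I) * K (x + (-(1/4) : ℝ) * Complex.I)) := by
  obtain ⟨C, hC⟩ := fK_bound hf
  refine intg _ ?_ C ?_
  · unfold K
    have := hf.1.continuous
    refine Continuous.mul (by fun_prop) (Continuous.div continuous_const (by fun_prop) ?_)
    intro x
    exact E_ne (line_ne _ (by norm_num) x) (by norm_num) (by norm_num)
  · intro x hx
    simpa using hC (x + (-(1/4) : ℝ) * Complex.I) (by simp) (by norm_num) (by simpa using hx)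

lemma K_zero {f : ℂ → ℂ} (hf : Nice f) :
    Integrable (fun x : ℝ => x * f x * K x) ∧
    ∫ x : ℝ, (x + (-(1/4) : ℝ) * Complex.I) * f (x + (-(1/4) : ℝ) * Complex.I) *
      K (x + (-(1/4) : ℝ) * Complex.I) = ∫ x : ℝ, x * f x * K x := by
  obtain ⟨C, hC⟩ := fK_bound hf.id_mul
  have := strip (fun z => f z / D z) (-(1/4)) 0 (by norm_num) ((fD hf).mono (by
    intro z hz
    exact ⟨by linarith [hz.1], by linarith [hz.2]⟩)) C (by
    intro z h1 h2 h3
    have hz : z ≠ 0 := by rintro rfl; norm_num at h3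
    rw [fDK f hz]
    exact hC z h1 (by linarith) h3)
  simp only [Complex.ofReal_zero, zero_mul, add_zero] at this
  have ae : (fun x : ℝ => f x / D x) =ᵐ[volume] fun x : ℝ => x * f x * K x := by
    filter_upwards [compl_mem_ae_iff.2 (measure_singleton (0 : ℝ))] with x hx
    exact fDK f (by exact_mod_cast hx)
  refine ⟨this.2.1.congr ae, ?_⟩
  rw [← integral_congr_ae ae, ← this.2.2]
  congr 1
  ext x
  exact (fDK f (line_ne _ (by norm_num) x)).symm

lemma K_per (z : ℂ) (n : ℕ) : K (z + n * pp) = K z := by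
  unfold K
  have : bb * (z + n * pp) = bb * z + n * (2 * π * Complex.I) := by
    rw [← bb_pp]; ring
  rw [this, Complex.exp_add, Complex.exp_nat_mul_two_pi_mul_I, mul_one]

lemma telescope {f : ℂ → ℂ} (hf : Nice f) (n : ℕ) :
    (∫ x : ℝ, f (x + (-(1/4) : ℝ) * Complex.I) * K (x + (-(1/4) : ℝ) * Complex.I)) -
      ∫ x : ℝ, f ((x + (-(1/4) : ℝ) * Complex.I) + n * pp) * K (x + (-(1/4) : ℝ) * Complex.I)
      = pp * ∑ k ∈ Finset.range n, f (k * pp) := by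
  induction n with
  | zero => simp
  | succ n ih =>
    have h := pole (hf.shift (n * pp))
    rw [Finset.sum_range_succ, mul_add, ← ih]
    rw [zero_add] at h
    rw [← h]
    have : ∫ x : ℝ, f (x + (1/4 : ℝ) * Complex.I + n * pp) * K (x + (1/4 : ℝ) * Complex.I) =
        ∫ x : ℝ, f ((x + (-(1/4) : ℝ) * Complex.I) + (n + 1 : ℕ) * pp) *
          K (x + (-(1/4) : ℝ) * Complex.I) := by
      rw [← integral_add_right_eq_self (μ := volume) (fun x : ℝ =>
        f (x + (1/4 : ℝ) * Complex.I + n * pp) * K (x + (1/4 : ℝ) * Complex.I)) (1/2)]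
      congr 1
      ext x
      have e : ((x + 1/2 : ℝ) : ℂ) + (1/4 : ℝ) * Complex.I = (x + (-(1/4) : ℝ) * Complex.I) + (1 : ℕ) * pp := by
        unfold pp; push_cast; ring
      rw [e, K_per]
      congr 2
      push_cast; ring
    rw [this]
    ring

noncomputable def aa : ℝ := 4 * π / 5
noncomputable def G (z : ℂ) : ℂ := Complex.exp (-(aa : ℂ) * z ^ 2)

lemma aa_pos : 0 < aa := by unfold aa; positivity

lemma niceG : Nice G := Nice.gauss aa_pos

lemma pp_sq : pp ^ 2 = Complex.I / 2 := by
  unfold pp; ring_nf; rw [Complex.I_sq]; ring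

lemma bb_eq : bb = 4 * π * pp := by unfold bb pp; ring

noncomputable def ff (z : ℂ) : ℂ := z * (z * G z + (-5 * pp) * G z)
noncomputable def H (j : ℂ) (z : ℂ) : ℂ := Complex.exp (-(j * bb) * z) * (z * (z * G z + (5 * pp) * G z))

lemma niceff : Nice ff := ((niceG.id_mul).add (niceG.const_mul _)).id_mul
lemma niceH (j : ℂ) : Nice (H j) := (((niceG.id_mul).add (niceG.const_mul _)).id_mul).exp_mul _

lemma G_shift (z : ℂ) : G (z + (5 : ℕ) * pp) = G z * Complex.exp (-(2 * bb) * z) := by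
  unfold G
  rw [← Complex.exp_add, Complex.exp_eq_exp_iff_exists_int]
  refine ⟨-5, ?_⟩
  rw [bb_eq]; unfold aa; push_cast
  linear_combination (-(4 * π / 5) * 25) * pp_sq

lemma pointwise {z : ℂ} (hz : Complex.exp (bb * z) - 1 ≠ 0) :
    ff z * K z - ff (z + (5 : ℕ) * pp) * K z = (-10 * pp) * (z * G z * K z) + (H 1 z + H 2 z) := by
  unfold ff H
  rw [G_shift]
  unfold K
  have e1 : Complex.exp (-(1 * bb) * z) = (Complex.exp (bb * z))⁻¹ := by
    rw [← Complex.exp_neg]; congr 1; ring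
  have e2 : Complex.exp (-(2 * bb) * z) = (Complex.exp (bb * z))⁻¹ * (Complex.exp (bb * z))⁻¹ := by
    rw [← Complex.exp_neg, ← Complex.exp_add]; congr 1; ring
  rw [e1, e2]
  have h0 := Complex.exp_ne_zero (bb * z)
  generalize Complex.exp (bb * z) = E at *
  push_cast
  field_simp
  ring

lemma main_rel : (-10 * pp) * (∫ x : ℝ, x * G x * K x) + ((∫ x : ℝ, H 1 x) + ∫ x : ℝ, H 2 x)
    = pp * ∑ k ∈ Finset.range 5, ff (k * pp) := by
  rw [← telescope niceff 5, ← (K_zero niceG).2, ← ((niceH 1).line (-(1/4))).2.2,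
    ← ((niceH 2).line (-(1/4))).2.2, ← integral_add ((niceH 1).line (-(1/4))).2.1 ((niceH 2).line (-(1/4))).2.1,
    ← integral_const_mul, ← integral_add ((K_int niceG.id_mul).const_mul _)
      (((niceH 1).add (niceH 2)).line (-(1/4))).2.1,
    ← integral_sub (K_int niceff) (K_int (niceff.shift _))]
  congr 1
  ext x
  exact (pointwise (E_ne (line_ne _ (by norm_num) x) (by norm_num) (by norm_num))).symm

lemma gauss_int (j : ℂ) : ∫ x : ℝ, Complex.exp (-(j * bb) * x) * G x =
    (Real.sqrt 5 / 2 : ℝ) * Complex.exp (5 * π * Complex.I * j ^ 2 / 2) := by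
  have h := integral_cexp_quadratic (b := -(aa : ℂ)) (by simpa using aa_pos) (-(j * bb)) 0
  have e : ∀ x : ℝ, Complex.exp (-(j * bb) * x) * G x =
      Complex.exp (-(aa : ℂ) * x ^ 2 + -(j * bb) * x + 0) := by
    intro x; unfold G; rw [← Complex.exp_add]; congr 1; ring
  simp_rw [e]
  rw [h]
  have hpi : (π : ℂ) ≠ 0 := by exact_mod_cast Real.pi_ne_zero
  congr 1
  · have : (π : ℂ) / - -(aa : ℂ) = ((5 / 4 : ℝ) : ℂ) := by
      unfold aa; push_cast; field_simp
    rw [this, show (1 / 2 : ℂ) = ((1 / 2 : ℝ) : ℂ) by push_cast; rfl,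
      ← Complex.ofReal_cpow (by norm_num), ← Real.sqrt_eq_rpow, Real.sqrt_div (by norm_num),
      show (4 : ℝ) = 2 ^ 2 by norm_num, Real.sqrt_sq (by norm_num)]
  · congr 1
    rw [bb_eq]; unfold aa; push_cast
    field_simp
    ring_nf
    rw [pp_sq]; ring

lemma H_int (j : ℂ) : ∫ x : ℝ, H j x = (5 / (8 * π) + 25 * Complex.I / 4 * j * (j / 2 - 1)) *
    ((Real.sqrt 5 / 2 : ℝ) * Complex.exp (5 * π * Complex.I * j ^ 2 / 2)) := by
  have hpi : (π : ℂ) ≠ 0 := by exact_mod_cast Real.pi_ne_zero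
  set α : ℂ := -(5 / (8 * π)) with hα
  set β : ℂ := 25 / (8 * π) * pp * (j / 2 - 1) with hβ
  set c : ℂ := (5 / (8 * π) + 25 * Complex.I / 4 * j * (j / 2 - 1)) with hc
  have nE := niceG.exp_mul (-(j * bb))
  have nP : Nice (fun z => α * (z * (Complex.exp (-(j * bb) * z) * G z)) +
    β * (Complex.exp (-(j * bb) * z) * G z)) := (nE.id_mul.const_mul α).add (nE.const_mul β)
  have nD : Nice (fun z => H j z + (-c) * (Complex.exp (-(j * bb) * z) * G z)) :=
    (niceH j).add (nE.const_mul _)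
  have hder : ∀ z : ℂ, HasDerivAt (fun z => α * (z * (Complex.exp (-(j * bb) * z) * G z)) +
    β * (Complex.exp (-(j * bb) * z) * G z))
      (H j z + (-c) * (Complex.exp (-(j * bb) * z) * G z)) z := by
    intro z
    have d1 : HasDerivAt (fun z => Complex.exp (-(j * bb) * z))
      (Complex.exp (-(j * bb) * z) * (-(j * bb) * 1)) z :=
      ((hasDerivAt_id z).const_mul (-(j * bb))).cexp
    have d2 : HasDerivAt G (G z * (-(aa : ℂ) * ((2 : ℕ) * z ^ (2 - 1) * 1))) z :=
      (((hasDerivAt_id z).pow 2).const_mul (-(aa : ℂ))).cexp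
    have d3 := d1.mul d2
    have d4 := (((hasDerivAt_id z).mul d3).const_mul α).add (d3.const_mul β)
    refine d4.congr_deriv ?_
    unfold H
    simp only [id, Pi.mul_apply]
    generalize Complex.exp (-(j * bb) * z) = X
    generalize G z = Y
    rw [hα, hβ, hc, bb_eq]; unfold aa; push_cast
    field_simp
    ring_nf
    simp only [pp_sq]
    ring
  have key := integral_eq_zero_of_hasDerivAt_of_integrable
    (f := fun x : ℝ => α * (x * (Complex.exp (-(j * bb) * x) * G x)) +
    β * (Complex.exp (-(j * bb) * x) * G x))
    (f' := fun x : ℝ => H j x + (-c) * (Complex.exp (-(j * bb) * x) * G x))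
    (fun x => (hder x).comp_ofReal) (nD.line 0).1 (nP.line 0).1
  rw [integral_add ((niceH j).line 0).1 ((nE.const_mul (-c)).line 0).1, integral_const_mul, gauss_int] at key
  linear_combination key

lemma W_val : (∫ x : ℝ, H 1 x) + ∫ x : ℝ, H 2 x =
    (Real.sqrt 5 / 2 : ℝ) * (25 / 8 + (5 / (8 * π) : ℝ) * (1 + Complex.I)) := by
  rw [H_int, H_int]
  have e1 : Complex.exp (5 * π * Complex.I * 1 ^ 2 / 2) = Complex.I := by
    refine Eq.trans ?_ Complex.exp_pi_div_two_mul_I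
    rw [Complex.exp_eq_exp_iff_exists_int]
    exact ⟨1, by push_cast; ring⟩
  have e2 : Complex.exp (5 * π * Complex.I * 2 ^ 2 / 2) = 1 := by
    rw [Complex.exp_eq_one_iff]
    exact ⟨5, by push_cast; ring⟩
  rw [e1, e2]
  push_cast
  linear_combination (-(25 / 8) * ((Real.sqrt 5 : ℂ) / 2)) * Complex.I_sq

lemma G_pp (k : ℕ) : G (k * pp) = Complex.exp (-(2 * π * k ^ 2 / 5) * Complex.I) := by
  unfold G aa
  congr 1
  push_cast
  rw [mul_pow, pp_sq]; ring

lemma sum_val : ∑ k ∈ Finset.range 5, ff (k * pp) =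
    Complex.I / 2 * (-8 * Complex.exp (((-(2 * π / 5) : ℝ) : ℂ) * Complex.I) - 12 * Complex.exp ((2 * π / 5 : ℝ) * Complex.I)) := by
  have e : ∀ k : ℕ, ff (k * pp) = Complex.I / 2 * (k * (k - 5)) * Complex.exp (-(2 * π * k ^ 2 / 5) * Complex.I) := by
    intro k
    unfold ff
    rw [G_pp]
    linear_combination ((k : ℂ) * (k - 5) * Complex.exp (-(2 * π * k ^ 2 / 5) * Complex.I)) * pp_sq
  simp only [e, Finset.sum_range_succ, Finset.sum_range_zero]
  have e1 : Complex.exp (-(2 * π * (1 : ℕ) ^ 2 / 5) * Complex.I) = Complex.exp (((-(2 * π / 5) : ℝ) : ℂ) * Complex.I) := by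
    congr 1; push_cast; ring
  have e2 : Complex.exp (-(2 * π * (2 : ℕ) ^ 2 / 5) * Complex.I) = Complex.exp ((2 * π / 5 : ℝ) * Complex.I) := by
    rw [Complex.exp_eq_exp_iff_exists_int]; exact ⟨-1, by push_cast; ring⟩
  have e3 : Complex.exp (-(2 * π * (3 : ℕ) ^ 2 / 5) * Complex.I) = Complex.exp ((2 * π / 5 : ℝ) * Complex.I) := by
    rw [Complex.exp_eq_exp_iff_exists_int]; exact ⟨-2, by push_cast; ring⟩
  have e4 : Complex.exp (-(2 * π * (4 : ℕ) ^ 2 / 5) * Complex.I) = Complex.exp (((-(2 * π / 5) : ℝ) : ℂ) * Complex.I) := by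
    rw [Complex.exp_eq_exp_iff_exists_int]; exact ⟨-3, by push_cast; ring⟩
  rw [e1, e2, e3, e4]
  push_cast
  ring

lemma A_val : (2 * Complex.I * ∫ x : ℝ, x * G x * K x).re = (8 - 3 * Real.sqrt 5) / 16 := by
  have h := main_rel
  rw [W_val, sum_val] at h
  have hp : pp * (1 - Complex.I) = 1 := by
    unfold pp; ring_nf; rw [Complex.I_sq]; ring
  have h2 : 2 * Complex.I * (∫ x : ℝ, x * G x * K x) = (1 / 5 : ℝ) * ((1 + Complex.I) * ((Real.sqrt 5 / 2 : ℝ) * (25 / 8 + (5 / (8 * π) : ℝ) * (1 + Complex.I)))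
     - Complex.I * (Complex.I / 2 * (-8 * Complex.exp (((-(2 * π / 5) : ℝ) : ℂ) * Complex.I) - 12 * Complex.exp ((2 * π / 5 : ℝ) * Complex.I)))) := by
    generalize (∫ x : ℝ, (x : ℂ) * G x * K x) = A at *
    generalize (Complex.exp (((-(2 * π / 5) : ℝ) : ℂ) * Complex.I)) = X at *
    generalize (Complex.exp ((2 * π / 5 : ℝ) * Complex.I)) = Y at *
    generalize hW : ((Real.sqrt 5 / 2 : ℝ) * (25 / 8 + (5 / (8 * π) : ℝ) * (1 + Complex.I)) : ℂ) = W at *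
    have hI := Complex.I_sq
    push_cast
    linear_combination (-(1/5) * Complex.I * (1 - Complex.I)) * h
      + (-2 * Complex.I * A + (1/5) * Complex.I * (Complex.I / 2 * (8 * X + 12 * Y))) * hp + (-(1/5) * W) * hI
  rw [h2, Complex.re_ofReal_mul]
  have c1 : Real.cos (2 * π / 5) = (Real.sqrt 5 - 1) / 4 := by
    rw [show 2 * π / 5 = 2 * (π / 5) by ring, Real.cos_two_mul, Real.cos_pi_div_five]
    have := Real.sq_sqrt (show (0:ℝ) ≤ 5 by norm_num)
    nlinarith
  have r1 := Complex.exp_ofReal_mul_I_re (2 * π / 5)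
  have r2 := Complex.exp_ofReal_mul_I_re (-(2 * π / 5))
  rw [Real.cos_neg] at r2
  rw [c1] at r1 r2
  generalize (Complex.exp (((-(2 * π / 5) : ℝ) : ℂ) * Complex.I)) = X at *
  generalize (Complex.exp ((2 * π / 5 : ℝ) * Complex.I)) = Y at *
  generalize (5 / (8 * π) : ℝ) = q
  have : (25 / 8 : ℂ) = ((25 / 8 : ℝ) : ℂ) := by push_cast; rfl
  have h12 : (Complex.I / 2 : ℂ) = ((1 / 2 : ℝ) : ℂ) * Complex.I := by push_cast; ring
  rw [this, h12]
  simp [Complex.mul_re, Complex.mul_im, r1, r2]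
  ring

noncomputable def F (t : ℂ) : ℂ := 2 * t * Complex.exp (2 * π / 5 * Complex.I * t ^ 2) / (Complex.exp (2 * π * t) - 1)

lemma F_bound {t : ℂ} (him : 0 ≤ t.im) (hre : t.im ≤ t.re) (h0 : t ≠ 0) :
    Complex.exp (2 * π * t) - 1 ≠ 0 ∧ ‖F t * t‖ ≤ ‖t‖ ∧ ‖F t * t‖ ≤ ‖t‖⁻¹ := by
  have hp := Real.pi_gt_three
  have hr : 0 < ‖t‖ := norm_pos_iff.2 h0
  have hsq : ‖t‖ ^ 2 = t.re ^ 2 + t.im ^ 2 := by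
    rw [Complex.sq_norm, Complex.normSq_apply]; ring
  have hv : 4 * ‖t‖ ≤ 2 * π * t.re := by
    have h1 : 2 * ‖t‖ ≤ 3 * t.re := by
      have hre0 : 0 ≤ t.re := him.trans hre
      refine (pow_le_pow_iff_left₀ (by positivity) (by positivity) two_ne_zero).1 ?_
      nlinarith
    nlinarith [him.trans hre]
  have hn : ‖Complex.exp (2 * π * t)‖ = Real.exp (2 * π * t.re) := by
    rw [Complex.norm_exp]; congr 1; simp [Complex.mul_re]
  set v := 2 * π * t.re with hvd
  have hden : Real.exp v - 1 ≤ ‖Complex.exp (2 * π * t) - 1‖ := by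
    have e := norm_sub_norm_le (Complex.exp (2 * π * t)) (1 : ℂ)
    rwa [norm_one, hn] at e
  have hv0 : 0 < v := by linarith
  have hE1 : v ≤ Real.exp v - 1 := by linarith [Real.add_one_le_exp v]
  have hE3 : v ^ 3 / 6 ≤ Real.exp v - 1 := by
    have := Real.sum_le_exp_of_nonneg hv0.le 4
    simp [Finset.sum_range_succ, Nat.factorial] at this
    nlinarith [sq_nonneg v]
  have hdpos : 0 < ‖Complex.exp (2 * π * t) - 1‖ := by linarith
  have hnum : ‖2 * t * Complex.exp (2 * π / 5 * Complex.I * t ^ 2) * t‖ ≤ 2 * ‖t‖ ^ 2 := by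
    have : ‖Complex.exp (2 * π / 5 * Complex.I * t ^ 2)‖ ≤ 1 := by
      rw [Complex.norm_exp, Real.exp_le_one_iff]
      have : (2 * π / 5 * Complex.I * t ^ 2 : ℂ) = ((2 * π / 5 : ℝ) : ℂ) * (Complex.I * t ^ 2) := by
        push_cast; ring
      rw [this, Complex.re_ofReal_mul]
      have e : (Complex.I * t ^ 2).re = -(2 * (t.re * t.im)) := by
        simp [sq, Complex.mul_re, Complex.mul_im]; ring
      rw [e]
      have : 0 ≤ t.re * t.im := mul_nonneg (him.trans hre) him
      have : 0 ≤ 2 * π / 5 * (t.re * t.im) := by positivity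
      linarith
    rw [norm_mul, norm_mul, norm_mul]
    simp only [Complex.norm_ofNat]
    nlinarith [mul_le_mul_of_nonneg_left this (by positivity : 0 ≤ 2 * ‖t‖ ^ 2)]
  have eF : ‖F t * t‖ = ‖2 * t * Complex.exp (2 * π / 5 * Complex.I * t ^ 2) * t‖ / ‖Complex.exp (2 * π * t) - 1‖ := by
    unfold F; rw [div_mul_eq_mul_div, norm_div]
  refine ⟨norm_pos_iff.1 hdpos, ?_, ?_⟩
  · rw [eF, div_le_iff₀ hdpos]
    refine hnum.trans ?_
    have : 4 * ‖t‖ ≤ ‖Complex.exp (2 * π * t) - 1‖ := by linarith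
    nlinarith
  · rw [eF, div_le_iff₀ hdpos]
    refine hnum.trans ?_
    rw [inv_mul_eq_div, le_div_iff₀ hr]
    have : (4 * ‖t‖) ^ 3 ≤ v ^ 3 := pow_le_pow_left₀ (by positivity) hv 3
    nlinarith [pow_pos hr 3]

lemma exp_strip {w : ℂ} (h1 : 0 ≤ w.im) (h2 : w.im ≤ π / 4) :
    0 ≤ (Complex.exp w).im ∧ (Complex.exp w).im ≤ (Complex.exp w).re := by
  have hp := Real.pi_pos
  rw [Complex.exp_im, Complex.exp_re]
  have hs : 0 ≤ Real.sin w.im := Real.sin_nonneg_of_nonneg_of_le_pi h1 (by linarith)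
  refine ⟨by positivity, mul_le_mul_of_nonneg_left ?_ (Real.exp_pos _).le⟩
  calc Real.sin w.im ≤ Real.sin (π / 4) := Real.sin_le_sin_of_le_of_le_pi_div_two (by linarith) (by linarith) h2
    _ = Real.cos (π / 4) := by rw [Real.sin_pi_div_four, Real.cos_pi_div_four]
    _ ≤ Real.cos w.im := Real.cos_le_cos_of_nonneg_of_le_pi h1 (by linarith) h2

lemma exp_sub (h : ℝ → ℂ) : ∫ x : ℝ, h (Real.exp x) * (Real.exp x : ℂ) = ∫ t in Ioi (0 : ℝ), h t := by
  have := integral_image_eq_integral_abs_deriv_smul (s := univ) (f := Real.exp) (f' := Real.exp)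
    MeasurableSet.univ (fun x _ => (Real.hasDerivAt_exp x).hasDerivWithinAt)
    Real.exp_injective.injOn h
  rw [image_univ, Real.range_exp, setIntegral_univ] at this
  rw [this]
  congr 1
  ext x
  rw [abs_of_pos (Real.exp_pos x), Complex.real_smul, mul_comm]

lemma rot : ∫ t in Ioi (0 : ℝ), F t = ∫ s in Ioi (0 : ℝ), F ((1 + Complex.I) * s) * (1 + Complex.I) := by
  have hp := Real.pi_pos
  have := (strip (fun w => F (Complex.exp w) * Complex.exp w) 0 (π / 4) (by positivity) (by
    intro w hw
    have hb := F_bound (exp_strip hw.1 hw.2).1 (exp_strip hw.1 hw.2).2 (Complex.exp_ne_zero w)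
    apply DifferentiableAt.differentiableWithinAt
    unfold F
    refine DifferentiableAt.mul (DifferentiableAt.div (by fun_prop) (by fun_prop) hb.1) (by fun_prop)) 1 (by
    intro w h1 h2 _
    have hb := F_bound (exp_strip h1 h2).1 (exp_strip h1 h2).2 (Complex.exp_ne_zero w)
    rw [Complex.norm_exp] at hb
    rw [one_mul]
    rcases le_total 0 w.re with h | h
    · rw [abs_of_nonneg h, Real.exp_neg]; exact hb.2.2
    · rw [abs_of_nonpos h, neg_neg]; exact hb.2.1)).2.2
  simp only [Complex.ofReal_zero, zero_mul, add_zero] at this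
  have hs2 : Real.sqrt 2 ≠ 0 := by positivity
  have hom : Complex.exp (((π / 4 : ℝ) : ℂ) * Complex.I) = (1 + Complex.I) * ((Real.sqrt 2)⁻¹ : ℝ) := by
    rw [Complex.exp_mul_I, ← Complex.ofReal_cos, ← Complex.ofReal_sin, Real.cos_pi_div_four, Real.sin_pi_div_four]
    have : Real.sqrt 2 / 2 = (Real.sqrt 2)⁻¹ := by
      rw [eq_comm, inv_eq_iff_eq_inv, inv_div]
      rw [eq_div_iff hs2]; exact Real.mul_self_sqrt (by norm_num)
    rw [this]; ring
  have h1 := exp_sub (fun t => F t)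
  have h2 := exp_sub (fun t => F ((1 + Complex.I) * (((Real.sqrt 2)⁻¹ * t : ℝ) : ℂ)) * ((1 + Complex.I) * ((Real.sqrt 2)⁻¹ : ℝ)))
  rw [← h1]
  simp only [Complex.ofReal_exp] at *
  rw [this]
  simp_rw [Complex.exp_add, hom]
  have h3 := integral_comp_mul_left_Ioi (fun s : ℝ => F ((1 + Complex.I) * s) * (1 + Complex.I)) 0
    (b := (Real.sqrt 2)⁻¹) (by positivity)
  rw [mul_zero, inv_inv] at h3
  have h4 : ∫ s in Ioi (0 : ℝ), F ((1 + Complex.I) * s) * (1 + Complex.I) =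
      ((Real.sqrt 2)⁻¹ : ℝ) * ∫ x in Ioi (0 : ℝ), F ((1 + Complex.I) * (((Real.sqrt 2)⁻¹ * x : ℝ) : ℂ)) * (1 + Complex.I) := by
    rw [h3, Complex.real_smul, ← mul_assoc, ← Complex.ofReal_mul, inv_mul_cancel₀ hs2]; simp
  rw [h4, ← integral_const_mul]
  refine Eq.trans ?_ (h2.trans ?_)
  · congr 1
    ext x
    have : Complex.exp x * ((1 + Complex.I) * (((Real.sqrt 2)⁻¹ : ℝ) : ℂ)) =
      (1 + Complex.I) * (((Real.sqrt 2)⁻¹ * Real.exp x : ℝ) : ℂ) := by push_cast; ring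
    rw [this]
    push_cast; ring
  · congr 1
    ext x
    ring

lemma F_G (s : ℝ) : F ((1 + Complex.I) * s) * (1 + Complex.I) = 2 * Complex.I * (2 * (s * G s * K s)) := by
  unfold F G K bb aa
  have hI := Complex.I_sq
  have e : (2 * π / 5 * Complex.I * ((1 + Complex.I) * s) ^ 2 : ℂ) = -((4 * π / 5 : ℝ) : ℂ) * s ^ 2 := by
    push_cast
    linear_combination (2 * π / 5 * s ^ 2 * (Complex.I + 2) : ℂ) * hI
  rw [e, show (2 * π * ((1 + Complex.I) * s) : ℂ) = 2 * π * (1 + Complex.I) * s by ring]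
  generalize Complex.exp (-((4 * π / 5 : ℝ) : ℂ) * s ^ 2) = X
  generalize (Complex.exp (2 * π * (1 + Complex.I) * s) - 1) = Y
  rw [div_eq_mul_inv, one_div]
  linear_combination (2 * s * X * Y⁻¹) * hI

lemma half : ∫ x : ℝ, x * G x * K x = (∫ x in Ioi (0:ℝ), 2 * (x * G x * K x)) + ((2 * aa)⁻¹ : ℝ) := by
  have hi := (K_zero niceG).1
  rw [← intervalIntegral.integral_Iic_add_Ioi (b := 0) hi.integrableOn hi.integrableOn]
  have hneg := integral_comp_neg_Ioi (0 : ℝ) (fun x : ℝ => (x : ℂ) * G x * K x)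
  rw [neg_zero] at hneg
  rw [← hneg]
  have hg := integral_mul_cexp_neg_mul_sq (b := (aa : ℂ)) (by simpa using aa_pos)
  have hgi : IntegrableOn (fun x : ℝ => (x : ℂ) * G x) (Ioi 0) := (niceG.id_mul.line 0).1.integrableOn
  have : ∫ x in Ioi (0:ℝ), ((-x : ℝ) : ℂ) * G ((-x : ℝ) : ℂ) * K ((-x : ℝ) : ℂ) =
      ∫ x in Ioi (0:ℝ), ((x : ℂ) * G x * K x + x * G x) := by
    refine setIntegral_congr_fun measurableSet_Ioi ?_
    intro x hx
    have hx0 : (x : ℂ) ≠ 0 := by exact_mod_cast (ne_of_gt hx)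
    have h1 := E_ne hx0 (by simp) (by simp)
    have hG : G ((-x : ℝ) : ℂ) = G x := by unfold G; push_cast; rw [neg_sq]
    have hK : K ((-x : ℝ) : ℂ) = -1 - K x := by
      unfold K
      push_cast
      have h0 := Complex.exp_ne_zero (bb * x)
      rw [mul_neg, Complex.exp_neg]
      generalize Complex.exp (bb * x) = E at *
      have h2 : 1 - E ≠ 0 := by intro h; apply h1; linear_combination -h
      have h3 : E⁻¹ - 1 ≠ 0 := by
        intro h; apply h2; field_simp at h; simpa using h
      field_simp
      ring
    simp only [hG, hK]
    push_cast; ring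
  rw [this, integral_add hi.integrableOn hgi, integral_const_mul]
  have hg' : ∫ x in Ioi (0:ℝ), (x : ℂ) * G x = (2 * (aa : ℂ))⁻¹ := hg
  rw [hg']
  push_cast; ring

lemma J_re : (∫ t in Ioi (0 : ℝ), F t).re = (8 - 3 * Real.sqrt 5) / 16 := by
  rw [rot]
  simp_rw [F_G]
  rw [integral_const_mul, ← A_val, half, mul_add, Complex.add_re]
  simp

lemma F_int : IntegrableOn (fun t : ℝ => F t) (Ioi 0) := by
  by_contra h
  have := J_re
  rw [integral_undef h] at this
  have h5 := Real.sq_sqrt (show (0:ℝ) ≤ 5 by norm_num)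
  simp at this
  have : Real.sqrt 5 = 8 / 3 := by linarith
  rw [this] at h5
  norm_num at h5

lemma F_re (t : ℝ) : (F t).re = 2 * t * (Real.cos (2 * π * t ^ 2 / 5) / (Real.exp (2 * π * t) - 1)) := by
  have : F t = ((2 * t / (Real.exp (2 * π * t) - 1) : ℝ) : ℂ) * Complex.exp ((2 * π * t ^ 2 / 5 : ℝ) * Complex.I) := by
    unfold F
    push_cast
    rw [show (2 * π / 5 * Complex.I * t ^ 2 : ℂ) = 2 * π * t ^ 2 / 5 * Complex.I by ring]
    ring
  rw [this, Complex.re_ofReal_mul, Complex.exp_ofReal_mul_I_re]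
  ring

lemma value : (∫ x in Ioi (0:ℝ), Real.cos (2 * π * x / 5) / (Real.exp (2 * π * Real.sqrt x) - 1)) =
      (8 - 3 * Real.sqrt 5) / 16 := by
  rw [← J_re, ← integral_comp_rpow_Ioi_of_pos (p := 2) (by norm_num)]
  have h := integral_re F_int
  simp only [RCLike.re_to_complex] at h
  rw [← h]
  refine setIntegral_congr_fun measurableSet_Ioi ?_
  intro x hx
  have hx : 0 < x := hx
  simp only [F_re, smul_eq_mul]
  rw [Real.rpow_two, Real.sqrt_sq hx.le]
  norm_num

end RC

/-- Ramanujan's integral `R_C(0, 2/5)` converges and equals `(8 - 3√5)/16`. -/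
theorem ramanujan_RC_zero_twoFifths :
    IntegrableOn
      (fun x : ℝ => Real.cos (2 * π * x / 5) / (Real.exp (2 * π * Real.sqrt x) - 1)) (Ioi 0) ∧
    (∫ x in Ioi (0:ℝ), Real.cos (2 * π * x / 5) / (Real.exp (2 * π * Real.sqrt x) - 1)) =
      (8 - 3 * Real.sqrt 5) / 16 := by
  refine ⟨?_, RC.value⟩
  by_contra h
  have := RC.value
  rw [integral_undef h] at this
  have h5 := Real.sq_sqrt (show (0:ℝ) ≤ 5 by norm_num)
  have : Real.sqrt 5 = 8 / 3 := by linarith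
  rw [this] at h5
  norm_num at h5
end

section
/- For every positive real number n, R_C(0,n) = (1/n)·√(2/n)·Υ(1/n) − Υ(n), where Υ(n) = 1/(2πn) + ∫_0^∞ sin(πnx)/(exp(2π√x) − 1) dx and R_C(0,n) = ∫_0^∞ cos(πnx)/(exp(2π√x) − 1) dx. -/
open MeasureTheory Real Set

noncomputable def rg (u : ℝ) : ℝ := 1 / (Real.exp (2 * π * u) - 1)

lemma rg_nonneg {u : ℝ} (hu : 0 < u) : 0 ≤ rg u := by
  unfold rg
  have : 1 ≤ Real.exp (2 * π * u) := Real.one_le_exp (by positivity)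
  exact div_nonneg zero_le_one (by linarith)

lemma rg_meas : Measurable rg := by
  unfold rg; fun_prop

lemma mul_rg_le {u : ℝ} (hu : 0 < u) : u * rg u ≤ Real.exp (-π * u) := by
  unfold rg
  have h1 : 1 < Real.exp (2 * π * u) := by rw [Real.one_lt_exp_iff]; positivity
  rw [mul_one_div, div_le_iff₀ (by linarith)]
  have h2 : Real.exp (-π * u) * (Real.exp (2 * π * u) - 1) = Real.exp (π * u) - Real.exp (-(π * u)) := by
    rw [mul_sub, ← Real.exp_add]; ring_nf
  rw [h2]
  have h3 := Real.self_le_sinh_iff.2 (show 0 ≤ π * u by positivity)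
  rw [Real.sinh_eq] at h3
  have : u ≤ π * u := by nlinarith [Real.pi_gt_three]
  have : 0 ≤ π * u := by positivity
  linarith

lemma mul_rg_int : IntegrableOn (fun u => u * rg u) (Ioi 0) := by
  refine Integrable.mono' (g := fun u => Real.exp (-π * u))
    (integrableOn_exp_mul_Ioi (by linarith [Real.pi_pos]) 0) ?_ ?_
  · exact (measurable_id.mul rg_meas).aestronglyMeasurable
  · filter_upwards [ae_restrict_mem measurableSet_Ioi] with u hu
    rw [Real.norm_of_nonneg (mul_nonneg (le_of_lt hu) (rg_nonneg hu))]
    exact mul_rg_le hu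

lemma gauss_int (s : ℂ) (hs : 0 < s.re) (u : ℝ) :
    Integrable (fun x : ℝ => (x : ℂ) * Complex.exp (-(π * s) * x ^ 2 + 2 * π * Complex.I * u * x)) := by
  have hb : 0 < ((π : ℂ) * s).re := by simp; positivity
  refine (integrable_mul_cexp_neg_mul_sq hb).mono (by fun_prop) (Filter.Eventually.of_forall fun x => ?_)
  rw [Complex.exp_add]
  have : ‖Complex.exp (2 * π * Complex.I * u * x)‖ = 1 := by
    rw [show (2 * π * Complex.I * u * x : ℂ) = ((2 * π * u * x : ℝ) : ℂ) * Complex.I by push_cast; ring]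
    exact Complex.norm_exp_ofReal_mul_I _
  simp [this]

lemma gauss_full (s : ℂ) (hs : 0 < s.re) (u : ℝ) :
    ∫ x : ℝ, (x : ℂ) * Complex.exp (-(π * s) * x ^ 2 + 2 * π * Complex.I * u * x) =
      (Complex.I * u / s) * ((1 / s) ^ (1 / 2 : ℂ) * Complex.exp (-(π * (1 / s)) * u ^ 2)) := by
  have hb : 0 < ((π : ℂ) * s).re := by simp; positivity
  have hs0 : s ≠ 0 := by rintro rfl; simp at hs
  have hpi : (π : ℂ) ≠ 0 := by exact_mod_cast Real.pi_ne_zero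
  have hI := gauss_int s hs u
  have hE : Integrable (fun x : ℝ => Complex.exp (-(π * s) * x ^ 2 + 2 * π * Complex.I * u * x)) := by
    have := integrable_cexp_quadratic hb (2 * π * Complex.I * u) 0
    simpa using this
  have hval : ∫ x : ℝ, Complex.exp (-(π * s) * x ^ 2 + 2 * π * Complex.I * u * x) =
      (1 / s) ^ (1 / 2 : ℂ) * Complex.exp (-(π * (1 / s)) * u ^ 2) := by
    have := integral_cexp_quadratic (b := -(π * s)) (by simpa using hb) (2 * π * Complex.I * u) 0
    simp only [add_zero, neg_neg] at this
    rw [this]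
    congr 2
    · field_simp
    · field_simp
      simp [Complex.I_sq]
      ring
  have hz := integral_eq_zero_of_hasDerivAt_of_integrable
    (f := fun x : ℝ => Complex.exp (-(π * s) * x ^ 2 + 2 * π * Complex.I * u * x))
    (f' := fun x : ℝ => (-2 * π * s) * ((x : ℂ) * Complex.exp (-(π * s) * x ^ 2 + 2 * π * Complex.I * u * x))
      + (2 * π * Complex.I * u) * Complex.exp (-(π * s) * x ^ 2 + 2 * π * Complex.I * u * x))
    (fun x => by
      have h0 : HasDerivAt (fun x : ℂ => Complex.exp (-(π * s) * x ^ 2 + 2 * π * Complex.I * u * x))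
        ((-2 * π * s) * ((x : ℂ) * Complex.exp (-(π * s) * x ^ 2 + 2 * π * Complex.I * u * x))
      + (2 * π * Complex.I * u) * Complex.exp (-(π * s) * x ^ 2 + 2 * π * Complex.I * u * x)) (x : ℂ) := by
        have := (((hasDerivAt_pow 2 (x : ℂ)).const_mul (-(π * s))).add
          ((hasDerivAt_id (x : ℂ)).const_mul (2 * π * Complex.I * u))).cexp
        convert! this using 1
        simp
        ring
      exact h0.comp_ofReal)
    ((hI.const_mul _).add (hE.const_mul _)) hE
  rw [integral_add (hI.const_mul _) (hE.const_mul _), integral_const_mul, integral_const_mul, hval] at hz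
  have h2 : (2 * π * s : ℂ) ≠ 0 := by simp [hs0, hpi]
  apply mul_left_cancel₀ h2
  have : (2 * π * s : ℂ) * (Complex.I * u / s) = 2 * π * Complex.I * u := by field_simp
  rw [← mul_assoc, this]
  linear_combination -hz

lemma gauss_half (s : ℂ) (hs : 0 < s.re) (u : ℝ) :
    ∫ x in Ioi (0:ℝ), (x * Real.sin (2 * π * x * u) : ℝ) * Complex.exp (-(π * s) * x ^ 2) =
      (u / (2 * s)) * ((1 / s) ^ (1 / 2 : ℂ) * Complex.exp (-(π * (1 / s)) * u ^ 2)) := by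
  have h2 : ∀ x : ℝ, ((x * Real.sin (2 * π * x * u) : ℝ) : ℂ) * Complex.exp (-(π * s) * (x : ℂ) ^ 2)
    = (1 / (2 * Complex.I)) * ((x : ℂ) * Complex.exp (-(π * s) * x ^ 2 + 2 * π * Complex.I * u * x))
      - (1 / (2 * Complex.I)) * ((x : ℂ) * Complex.exp (-(π * s) * x ^ 2 + 2 * π * Complex.I * (-u : ℝ) * x)) := by
    intro x
    rw [Complex.exp_add, Complex.exp_add]
    push_cast
    rw [Complex.sin, show (-(2 * π * x * u) * Complex.I : ℂ) = 2 * π * Complex.I * -u * x by ring,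
      show ((2 * π * x * u) * Complex.I : ℂ) = 2 * π * Complex.I * u * x by ring]
    field_simp
    simp only [Complex.I_sq]
    ring
  have hint : Integrable (fun x : ℝ => ((x * Real.sin (2 * π * x * u) : ℝ) : ℂ) * Complex.exp (-(π * s) * (x : ℂ) ^ 2)) := by
    simp only [h2]
    exact ((gauss_int s hs u).const_mul _).sub ((gauss_int s hs (-u)).const_mul _)
  have h1 := intervalIntegral.integral_Iic_add_Ioi (b := (0:ℝ)) hint.integrableOn hint.integrableOn
  have h4 := integral_comp_neg_Ioi (0:ℝ) (fun x : ℝ => ((x * Real.sin (2 * π * x * u) : ℝ) : ℂ) * Complex.exp (-(π * s) * (x : ℂ) ^ 2))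
  have h5 : ∀ x : ℝ, ((-x * Real.sin (2 * π * -x * u) : ℝ) : ℂ) * Complex.exp (-(π * s) * ((-x : ℝ) : ℂ) ^ 2)
    = ((x * Real.sin (2 * π * x * u) : ℝ) : ℂ) * Complex.exp (-(π * s) * (x : ℂ) ^ 2) := by
    intro x
    rw [show 2 * π * -x * u = -(2 * π * x * u) by ring, Real.sin_neg]
    push_cast
    rw [neg_sq]; ring
  simp only [h5, neg_zero] at h4
  rw [← h4, integral_congr_ae (μ := volume) (Filter.Eventually.of_forall h2),
    integral_sub ((gauss_int s hs u).const_mul _) ((gauss_int s hs (-u)).const_mul _),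
    integral_const_mul, integral_const_mul, gauss_full s hs, gauss_full s hs] at h1
  have hs0 : s ≠ 0 := by rintro rfl; simp at hs
  have h3 : ∀ A B : ℂ, B + B = A → B = A / 2 := by intro A B h; rw [← h]; ring
  rw [h3 _ _ h1]
  push_cast
  rw [neg_sq]
  field_simp
  ring

lemma lap (x : ℝ) (k : ℕ) :
    ∫ u in Ioi (0:ℝ), Real.sin (2 * π * x * u) * Real.exp (-(2 * π * (k + 1)) * u) =
      x / (2 * π * (x ^ 2 + (k + 1) ^ 2)) := by
  have ha : (-(2 * π * (k + 1)) + 2 * π * x * Complex.I : ℂ).re < 0 := by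
    have : (-(2 * π * (k + 1)) + 2 * π * x * Complex.I : ℂ) = (-(2 * π * (k + 1)) : ℝ) + (2 * π * x : ℝ) * Complex.I := by
      push_cast; ring
    rw [this]; simp; positivity
  have h := integral_exp_mul_complex_Ioi ha 0
  have hi := integrableOn_exp_mul_complex_Ioi ha 0
  have h2 := congrArg Complex.im h
  have h4 := integral_im hi
  simp only [RCLike.im_to_complex] at h4
  rw [← h4] at h2
  have h3 : ∀ u : ℝ, (Complex.exp ((-(2 * π * (k + 1)) + 2 * π * x * Complex.I) * u)).im =
      Real.sin (2 * π * x * u) * Real.exp (-(2 * π * (k + 1)) * u) := by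
    intro u
    rw [show ((-(2 * π * (k + 1)) + 2 * π * x * Complex.I) * u : ℂ) = (-(2 * π * (k + 1)) * u : ℝ) + (2 * π * x * u : ℝ) * Complex.I by
      push_cast; ring]
    rw [Complex.exp_im]
    simp [mul_comm]
  simp only [h3] at h2
  rw [h2]
  rw [show (-(2 * π * (k + 1)) + 2 * π * x * Complex.I : ℂ) = (-(2 * π * (k + 1)) : ℝ) + (2 * π * x : ℝ) * Complex.I by
      push_cast; ring]
  have hp := Real.pi_pos
  have : (0:ℝ) < x ^ 2 + (k + 1) ^ 2 := by positivity
  have h5 : ∀ a b : ℝ, (-(1:ℂ) / ((a : ℂ) + b * Complex.I)).im = b / (a ^ 2 + b ^ 2) := by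
    intro a b
    rw [Complex.div_im]; simp [Complex.normSq_apply]; ring
  simp only [Complex.ofReal_zero, mul_zero, Complex.exp_zero]
  rw [h5]
  have h6 : (-(2 * π * (k + 1))) ^ 2 + (2 * π * x) ^ 2 = 4 * π ^ 2 * (x ^ 2 + (k + 1) ^ 2) := by ring
  rw [h6, div_eq_div_iff (by positivity) (by positivity)]
  ring

lemma cot_sum {x : ℝ} (hx : 0 < x) :
    ∑' k : ℕ, x / (x ^ 2 + (k + 1) ^ 2) = π * (1 + 2 * rg x) / 2 - 1 / (2 * x) := by
  have hz : (Complex.I * x : ℂ) ∈ Complex.integerComplement := by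
    rw [Complex.mem_integerComplement_iff]
    rintro ⟨n, hn⟩
    have := congrArg Complex.im hn
    simp at this
    linarith
  have h := cot_series_rep' hz
  have hx' : (x : ℂ) ≠ 0 := by exact_mod_cast hx.ne'
  have ht : ∀ n : ℕ, (1 / (Complex.I * x - (n + 1)) + 1 / (Complex.I * x + (n + 1)) : ℂ) =
      (-2 * Complex.I) * ((x / (x ^ 2 + (n + 1) ^ 2) : ℝ) : ℂ) := by
    intro n
    have e1 : (Complex.I * x - (n + 1) : ℂ) ≠ 0 := by
      intro h; have := congrArg Complex.im h; simp at this; linarith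
    have e2 : (Complex.I * x + (n + 1) : ℂ) ≠ 0 := by
      intro h; have := congrArg Complex.im h; simp at this; linarith
    have e3 : ((x : ℂ) ^ 2 + (n + 1) ^ 2) ≠ 0 := by
      have : (0:ℝ) < x ^ 2 + (n + 1) ^ 2 := by positivity
      exact_mod_cast this.ne'
    push_cast
    rw [div_add_div _ _ e1 e2, mul_div_assoc', div_eq_div_iff (mul_ne_zero e1 e2) e3]
    ring_nf
    simp only [show Complex.I ^ 3 = -Complex.I by rw [pow_succ, Complex.I_sq]; ring]
    ring
  simp only [ht] at h
  rw [tsum_mul_left, ← Complex.ofReal_tsum, Complex.cot_pi_eq_exp_ratio,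
    show (2 * π * Complex.I * (Complex.I * x) : ℂ) = ((-(2 * π * x) : ℝ) : ℂ) by
      push_cast; linear_combination (2 * π * x : ℂ) * Complex.I_sq, ← Complex.ofReal_exp] at h
  set S := ∑' k : ℕ, x / (x ^ 2 + (k + 1) ^ 2)
  have hE : 1 < Real.exp (2 * π * x) := by rw [Real.one_lt_exp_iff]; positivity
  have hr : (Real.exp (-(2 * π * x)) + 1) / (1 - Real.exp (-(2 * π * x))) = 1 + 2 * rg x := by
    unfold rg
    rw [Real.exp_neg]
    have : Real.exp (2 * π * x) - 1 ≠ 0 := by linarith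
    field_simp
    ring
  have h' : (π : ℂ) * (((Real.exp (-(2 * π * x)) : ℝ) : ℂ) + 1) / (1 - ((Real.exp (-(2 * π * x)) : ℝ) : ℂ)) - 1 / x = 2 * (S : ℂ) := by
    have h2 := congrArg (fun z => Complex.I * z) h
    have e : ∀ a b : ℂ, Complex.I * (π * (a / (Complex.I * b)) - 1 / (Complex.I * x)) = π * a / b - 1 / x := by
      intro a b
      rcases eq_or_ne b 0 with rfl | hb
      · simp; field_simp; simp
      · field_simp
    rw [e] at h2
    rw [h2]
    linear_combination (-2 * (S : ℂ)) * Complex.I_sq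
  have h3 : π * (Real.exp (-(2 * π * x)) + 1) / (1 - Real.exp (-(2 * π * x))) - 1 / x = 2 * S := by
    exact_mod_cast h'
  rw [mul_div_assoc, hr] at h3
  have : 1 / (2 * x) = 1 / x / 2 := by field_simp
  rw [this]; linarith

lemma rg_hasSum {u : ℝ} (hu : 0 < u) :
    HasSum (fun k : ℕ => Real.exp (-(2 * π * (k + 1)) * u)) (rg u) := by
  have h1 : Real.exp (-(2 * π * u)) < 1 := by rw [Real.exp_lt_one_iff]; have := Real.pi_pos; nlinarith [mul_pos this hu]
  have h := (hasSum_geometric_of_lt_one (Real.exp_pos _).le h1).mul_left (Real.exp (-(2 * π * u)))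
  have hE : 1 < Real.exp (2 * π * u) := by rw [Real.one_lt_exp_iff]; positivity
  convert! h using 1
  · funext k
    rw [← Real.exp_nat_mul, ← Real.exp_add]; ring_nf
  · unfold rg
    rw [Real.exp_neg]
    have : Real.exp (2 * π * u) - 1 ≠ 0 := by linarith
    field_simp

lemma sine_self {x : ℝ} (hx : 0 < x) :
    ∫ u in Ioi (0:ℝ), Real.sin (2 * π * x * u) * rg u = (1 + 2 * rg x) / 4 - 1 / (4 * π * x) := by
  have hp := Real.pi_pos
  have hb : ∀ k : ℕ, 0 < 2 * π * ((k:ℝ) + 1) := fun k => by positivity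
  have hi2 : ∀ k : ℕ, IntegrableOn (fun u : ℝ => u * Real.exp (-(2 * π * (k + 1)) * u)) (Ioi 0) := by
    intro k
    have := integrableOn_rpow_mul_exp_neg_mul_rpow (p := 1) (s := 1) (by norm_num) one_pos (hb k)
    simpa using this
  have hv2 : ∀ k : ℕ, ∫ u in Ioi (0:ℝ), u * Real.exp (-(2 * π * (k + 1)) * u) = 1 / (2 * π * (k + 1)) ^ 2 := by
    intro k
    have := Real.integral_rpow_mul_exp_neg_mul_Ioi (a := 2) (by norm_num) (hb k)
    rw [Real.Gamma_two] at this
    norm_num at this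
    simp only [neg_mul]
    rw [this]; field_simp
    try norm_num
  have hbd : ∀ (k : ℕ) (u : ℝ), 0 < u → ‖Real.sin (2 * π * x * u) * Real.exp (-(2 * π * (k + 1)) * u)‖ ≤
      (2 * π * x) * (u * Real.exp (-(2 * π * (k + 1)) * u)) := by
    intro k u hu
    rw [norm_mul, Real.norm_of_nonneg (Real.exp_pos _).le, ← mul_assoc]
    gcongr
    have := Real.abs_sin_le_abs (x := 2 * π * x * u)
    rwa [abs_of_pos (show 0 < 2 * π * x * u by positivity)] at this
  have hF : ∀ k : ℕ, IntegrableOn (fun u : ℝ => Real.sin (2 * π * x * u) * Real.exp (-(2 * π * (k + 1)) * u)) (Ioi 0) := by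
    intro k
    refine Integrable.mono' ((hi2 k).const_mul (2 * π * x)) (by fun_prop) ?_
    filter_upwards [ae_restrict_mem measurableSet_Ioi] with u hu
    exact hbd k u hu
  have hs : Summable (fun k : ℕ => ∫ u in Ioi (0:ℝ), ‖Real.sin (2 * π * x * u) * Real.exp (-(2 * π * (k + 1)) * u)‖) := by
    refine Summable.of_nonneg_of_le (fun k => integral_nonneg fun _ => norm_nonneg _)
      (fun k => setIntegral_mono_on (hF k).norm ((hi2 k).const_mul (2 * π * x)) measurableSet_Ioi
        (fun u hu => hbd k u hu)) ?_
    simp only [integral_const_mul, hv2]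
    apply Summable.mul_left
    have h0 := (summable_nat_add_iff 1).2 (Real.summable_one_div_nat_pow.2 (one_lt_two))
    refine (h0.mul_left (1 / (2 * π) ^ 2)).congr fun k => ?_
    push_cast
    field_simp
  have h := hasSum_integral_of_summable_integral_norm hF hs
  have h1 : ∫ u in Ioi (0:ℝ), Real.sin (2 * π * x * u) * rg u =
     ∫ u in Ioi (0:ℝ), ∑' k : ℕ, Real.sin (2 * π * x * u) * Real.exp (-(2 * π * (k + 1)) * u) := by
    refine setIntegral_congr_fun measurableSet_Ioi fun u hu => ?_
    rw [tsum_mul_left, (rg_hasSum hu).tsum_eq]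
  rw [h1, ← h.tsum_eq]
  simp only [lap]
  have h2 : ∀ k : ℕ, x / (2 * π * (x ^ 2 + (k + 1) ^ 2)) = (1 / (2 * π)) * (x / (x ^ 2 + (k + 1) ^ 2)) := by
    intro k
    have : (0:ℝ) < x ^ 2 + (k + 1) ^ 2 := by positivity
    field_simp
  simp only [h2]
  rw [tsum_mul_left, cot_sum hx]
  field_simp
  ring

noncomputable def K0 (s : ℂ) : ℂ :=
  ∫ u in Ioi (0:ℝ), ((2 * (u * rg u) : ℝ) : ℂ) * Complex.exp (-(π * s) * u ^ 2)

lemma norm_cexp' (s : ℂ) (x : ℝ) :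
    ‖Complex.exp (-(π * s) * (x : ℂ) ^ 2)‖ = Real.exp (-(π * s.re) * x ^ 2) := by
  have := norm_cexp_neg_mul_sq (π * s) x
  rw [this]; simp

lemma T_int (s : ℂ) (hs : 0 < s.re) :
    Integrable (Function.uncurry fun x u : ℝ =>
      ((x * Real.sin (2 * π * x * u) : ℝ) : ℂ) * Complex.exp (-(π * s) * (x : ℂ) ^ 2) * ((4 * rg u : ℝ) : ℂ))
      ((volume.restrict (Ioi (0:ℝ))).prod (volume.restrict (Ioi (0:ℝ)))) := by
  have hp := Real.pi_pos
  have hA : IntegrableOn (fun x : ℝ => x ^ 2 * Real.exp (-(π * s.re) * x ^ 2)) (Ioi 0) := by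
    have := integrableOn_rpow_mul_exp_neg_mul_sq (b := π * s.re) (by positivity) (s := 2) (by norm_num)
    simpa using this
  have hB := (hA.const_mul (8 * π)).mul_prod mul_rg_int
  refine Integrable.mono' hB ?_ ?_
  · have := rg_meas
    apply Measurable.aestronglyMeasurable
    unfold Function.uncurry
    fun_prop
  · rw [Measure.prod_restrict]
    filter_upwards [ae_restrict_mem (measurableSet_Ioi.prod measurableSet_Ioi)] with z hz
    obtain ⟨x, u⟩ := z
    obtain ⟨hx, hu⟩ := hz
    simp only [mem_Ioi] at hx hu
    simp only [Function.uncurry_apply_pair]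
    have hg := rg_nonneg hu
    rw [norm_mul, norm_mul, norm_cexp', Complex.norm_real, Complex.norm_real, norm_mul,
      Real.norm_of_nonneg hx.le, Real.norm_of_nonneg (by positivity : 0 ≤ 4 * rg u)]
    have h1 : ‖Real.sin (2 * π * x * u)‖ ≤ 2 * π * x * u := by
      have := Real.abs_sin_le_abs (x := 2 * π * x * u)
      rwa [abs_of_pos (show 0 < 2 * π * x * u by positivity)] at this
    calc _ ≤ x * (2 * π * x * u) * Real.exp (-(π * s.re) * x ^ 2) * (4 * rg u) := by gcongr
      _ = _ := by ring

lemma K0_eq (s : ℂ) (hs : 0 < s.re) :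
    K0 s = (1 / (2 * π)) * (1 / s) ^ (1 / 2 : ℂ) - 1 / (2 * π * s)
      + (1 / s) * (1 / s) ^ (1 / 2 : ℂ) * K0 (1 / s) := by
  have hb : 0 < ((π : ℂ) * s).re := by simp; positivity
  have hs0 : s ≠ 0 := by rintro rfl; simp at hs
  have hpi : (π : ℂ) ≠ 0 := by exact_mod_cast Real.pi_ne_zero
  have hT := T_int s hs
  have hE : IntegrableOn (fun x : ℝ => (1 / π : ℂ) * Complex.exp (-(π * s) * (x : ℂ) ^ 2)) (Ioi 0) :=
    (integrable_cexp_neg_mul_sq hb).integrableOn.const_mul _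
  have hX : IntegrableOn (fun x : ℝ => (x : ℂ) * Complex.exp (-(π * s) * (x : ℂ) ^ 2)) (Ioi 0) :=
    (integrable_mul_cexp_neg_mul_sq hb).integrableOn
  have h1 : K0 s = ∫ x in Ioi (0:ℝ), (((1 / π : ℂ) * Complex.exp (-(π * s) * (x : ℂ) ^ 2)
      - (x : ℂ) * Complex.exp (-(π * s) * (x : ℂ) ^ 2))
      + ∫ u in Ioi (0:ℝ), ((x * Real.sin (2 * π * x * u) : ℝ) : ℂ) * Complex.exp (-(π * s) * (x : ℂ) ^ 2) * ((4 * rg u : ℝ) : ℂ)) := by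
    unfold K0
    refine setIntegral_congr_fun measurableSet_Ioi fun x hx => ?_
    have hx0 : (0:ℝ) < x := hx
    have hxc : (x : ℂ) ≠ 0 := by exact_mod_cast hx0.ne'
    have e : ∀ u : ℝ, ((x * Real.sin (2 * π * x * u) : ℝ) : ℂ) * Complex.exp (-(π * s) * (x : ℂ) ^ 2) * ((4 * rg u : ℝ) : ℂ)
      = (4 * x * Complex.exp (-(π * s) * (x : ℂ) ^ 2)) * ((Real.sin (2 * π * x * u) * rg u : ℝ) : ℂ) := by
      intro u; push_cast; ring
    simp only [e]
    rw [integral_const_mul, integral_complex_ofReal, sine_self hx0]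
    push_cast
    field_simp
    ring
  have h2 : ∫ x in Ioi (0:ℝ), ∫ u in Ioi (0:ℝ), ((x * Real.sin (2 * π * x * u) : ℝ) : ℂ) * Complex.exp (-(π * s) * (x : ℂ) ^ 2) * ((4 * rg u : ℝ) : ℂ)
      = (1 / s) * (1 / s) ^ (1 / 2 : ℂ) * K0 (1 / s) := by
    rw [integral_integral_swap hT]
    unfold K0
    rw [← integral_const_mul]
    congr 1
    funext u
    rw [integral_mul_const, gauss_half s hs]
    push_cast
    field_simp
    ring
  have hP : IntegrableOn (fun x : ℝ => ∫ u in Ioi (0:ℝ), ((x * Real.sin (2 * π * x * u) : ℝ) : ℂ) * Complex.exp (-(π * s) * (x : ℂ) ^ 2) * ((4 * rg u : ℝ) : ℂ)) (Ioi 0) :=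
    hT.integral_prod_left
  have hD : IntegrableOn (fun x : ℝ => (1 / π : ℂ) * Complex.exp (-(π * s) * (x : ℂ) ^ 2)
      - (x : ℂ) * Complex.exp (-(π * s) * (x : ℂ) ^ 2)) (Ioi 0) := hE.sub hX
  rw [h1, integral_add hD hP, h2, integral_sub hE hX, integral_const_mul,
    integral_gaussian_complex_Ioi hb, integral_mul_cexp_neg_mul_sq hb]
  rw [show (π / (π * s) : ℂ) = 1 / s by field_simp]
  congr 1
  field_simp

lemma K0_lim (σ : ℝ → ℂ) (s₀ : ℂ) (l : Filter ℝ) [l.IsCountablyGenerated]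
    (h : Filter.Tendsto σ l (nhds s₀)) (hr : ∀ᶠ e in l, 0 ≤ (σ e).re) :
    Filter.Tendsto (fun e => K0 (σ e)) l (nhds (K0 s₀)) := by
  unfold K0
  have hm := rg_meas
  refine tendsto_integral_filter_of_dominated_convergence (fun u => 2 * (u * rg u)) ?_ ?_ (mul_rg_int.const_mul 2) ?_
  · refine Filter.Eventually.of_forall fun e => ?_
    apply Measurable.aestronglyMeasurable
    fun_prop
  · filter_upwards [hr] with e he
    filter_upwards [ae_restrict_mem measurableSet_Ioi] with u hu
    have hu' : (0:ℝ) < u := hu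
    have hg := rg_nonneg hu'
    rw [norm_mul, norm_cexp', Complex.norm_real, Real.norm_of_nonneg (by positivity)]
    refine mul_le_of_le_one_right (by positivity) ?_
    rw [Real.exp_le_one_iff]
    have : 0 ≤ π * (σ e).re * u ^ 2 := by have := Real.pi_pos; positivity
    linarith
  · refine Filter.Eventually.of_forall fun u => ?_
    refine Filter.Tendsto.const_mul _ ?_
    exact (Complex.continuous_exp.tendsto _).comp (((h.const_mul _).neg).mul_const _)

lemma K0_bdry (y : ℝ) : K0 (-(y : ℂ) * Complex.I) =
    ((∫ x in Ioi (0:ℝ), Real.cos (π * y * x) / (Real.exp (2 * π * Real.sqrt x) - 1) : ℝ) : ℂ) +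
    ((∫ x in Ioi (0:ℝ), Real.sin (π * y * x) / (Real.exp (2 * π * Real.sqrt x) - 1) : ℝ) : ℂ) * Complex.I := by
  have key : ∀ φ : ℝ → ℝ, ∫ x in Ioi (0:ℝ), φ (π * y * x) / (Real.exp (2 * π * Real.sqrt x) - 1) =
      ∫ u in Ioi (0:ℝ), 2 * (u * rg u) * φ (π * y * u ^ 2) := by
    intro φ
    rw [← integral_comp_rpow_Ioi _ (two_ne_zero : (2:ℝ) ≠ 0)]
    refine setIntegral_congr_fun measurableSet_Ioi fun u hu => ?_
    have hu' : (0:ℝ) ≤ u := le_of_lt hu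
    simp only [Real.rpow_two, Real.sqrt_sq hu', smul_eq_mul, abs_two]
    rw [show (2:ℝ) - 1 = 1 by norm_num, Real.rpow_one]
    unfold rg
    ring
  have hi : ∀ φ : ℝ → ℝ, Measurable φ → (∀ t, |φ t| ≤ 1) →
      IntegrableOn (fun u => 2 * (u * rg u) * φ (π * y * u ^ 2)) (Ioi 0) := by
    intro φ hφ hb
    have hm := rg_meas
    refine (mul_rg_int.const_mul 2).mono (Measurable.aestronglyMeasurable (by fun_prop)) (Filter.Eventually.of_forall fun u => ?_)
    rw [norm_mul]
    exact mul_le_of_le_one_right (norm_nonneg _) (hb _)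
  rw [key, key, ← integral_complex_ofReal, ← integral_complex_ofReal, ← integral_mul_const, ← integral_add]
  · unfold K0
    congr 1
    funext u
    rw [show (-(π * (-(y:ℂ) * Complex.I)) * (u:ℂ) ^ 2) = ((π * y * u ^ 2 : ℝ) : ℂ) * Complex.I by push_cast; ring,
      Complex.exp_mul_I, ← Complex.ofReal_cos, ← Complex.ofReal_sin]
    push_cast
    ring
  · exact (hi _ Real.measurable_cos Real.abs_cos_le_one).ofReal
  · exact (hi _ Real.measurable_sin Real.abs_sin_le_one).ofReal.mul_const _

lemma K0_limit_eq (n : ℝ) (hn : 0 < n) :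
    K0 (-(n : ℂ) * Complex.I) = (1 / (2 * π)) * (Complex.I / n) ^ (1 / 2 : ℂ) - 1 / (2 * π) * (Complex.I / n)
      + (Complex.I / n) * (Complex.I / n) ^ (1 / 2 : ℂ) * K0 (Complex.I / n) := by
  have hn0 : (n : ℂ) ≠ 0 := by exact_mod_cast hn.ne'
  have hpi : (π : ℂ) ≠ 0 := by exact_mod_cast Real.pi_ne_zero
  have hs : (-(n : ℂ) * Complex.I) ≠ 0 := mul_ne_zero (neg_ne_zero.2 hn0) Complex.I_ne_zero
  have hinv : 1 / (-(n : ℂ) * Complex.I) = Complex.I / n := by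
    field_simp
    simp
  have hσ : Filter.Tendsto (fun e : ℝ => (e : ℂ) + -(n : ℂ) * Complex.I) (nhdsWithin 0 (Ioi 0)) (nhds (-(n : ℂ) * Complex.I)) := by
    have : Filter.Tendsto (fun e : ℝ => (e : ℂ) + -(n : ℂ) * Complex.I) (nhds 0) (nhds (((0:ℝ) : ℂ) + -(n : ℂ) * Complex.I)) :=
      Continuous.tendsto (by fun_prop) _
    rw [Complex.ofReal_zero, zero_add] at this
    exact this.mono_left nhdsWithin_le_nhds
  have hτ : Filter.Tendsto (fun e : ℝ => 1 / ((e : ℂ) + -(n : ℂ) * Complex.I)) (nhdsWithin 0 (Ioi 0)) (nhds (Complex.I / n)) := by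
    rw [← hinv]
    exact tendsto_const_nhds.div hσ hs
  have hre : ∀ e : ℝ, ((e : ℂ) + -(n : ℂ) * Complex.I).re = e := by intro e; simp
  have hre' : ∀ e : ℝ, 0 < e → 0 ≤ (1 / ((e : ℂ) + -(n : ℂ) * Complex.I)).re := by
    intro e he
    rw [one_div, Complex.inv_re, hre]
    exact div_nonneg he.le (Complex.normSq_nonneg _)
  have hw : Filter.Tendsto (fun e : ℝ => (1 / ((e : ℂ) + -(n : ℂ) * Complex.I)) ^ (1 / 2 : ℂ)) (nhdsWithin 0 (Ioi 0))
      (nhds ((Complex.I / n) ^ (1 / 2 : ℂ))) := by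
    refine hτ.cpow tendsto_const_nhds ?_
    rw [Complex.mem_slitPlane_iff]
    right
    rw [Complex.div_ofReal_im]
    simp [hn.ne']
  have hL := K0_lim _ _ _ hσ (by filter_upwards [self_mem_nhdsWithin] with e he; rw [hre]; exact le_of_lt he)
  have hL' := K0_lim _ _ _ hτ (by filter_upwards [self_mem_nhdsWithin] with e he; exact hre' e he)
  have hR := ((hw.const_mul (1 / (2 * π : ℂ))).sub (hτ.const_mul (1 / (2 * π : ℂ)))).add ((hτ.mul hw).mul hL')
  exact tendsto_nhds_unique_of_eventuallyEq hL hR (by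
    filter_upwards [self_mem_nhdsWithin] with e he
    rw [K0_eq _ (by rw [hre]; exact he)]
    congr 2
    rw [div_mul_div_comm, one_mul])

lemma w_eq (n : ℝ) (hn : 0 < n) :
    (Complex.I / n) ^ (1 / 2 : ℂ) = ((Real.sqrt (2 / n) / 2 : ℝ) : ℂ) * (1 + Complex.I) := by
  have hn0 : (n : ℂ) ≠ 0 := by exact_mod_cast hn.ne'
  have hr : ((Real.sqrt (2 / n) : ℝ) : ℂ) ^ 2 = 2 / n := by
    rw [← Complex.ofReal_pow, Real.sq_sqrt (by positivity)]; push_cast; rfl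
  have h : (Complex.I / n : ℂ) = (((Real.sqrt (2 / n) / 2 : ℝ) : ℂ) * (1 + Complex.I)) ^ 2 := by
    push_cast
    rw [mul_pow, div_pow, hr, show (1 + Complex.I) ^ 2 = 2 * Complex.I by
      linear_combination Complex.I_sq]
    field_simp
  rw [h, one_div, Complex.sq_cpow_two_inv]
  rw [Complex.re_ofReal_mul]
  simp
  positivity

/-- Ramanujan's reciprocity: `R_C(0,n) = (1/n)√(2/n) Υ(1/n) − Υ(n)`, where
`Υ(n) = 1/(2πn) + ∫_0^∞ sin(πnx)/(e^{2π√x} − 1) dx` and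
`R_C(0,n) = ∫_0^∞ cos(πnx)/(e^{2π√x} − 1) dx`. -/
theorem ramanujan_cosine_reciprocity (n : ℝ) (hn : 0 < n) :
    (∫ x in Ioi (0:ℝ), Real.cos (π * n * x) / (Real.exp (2 * π * Real.sqrt x) - 1)) =
      (1 / n) * Real.sqrt (2 / n) *
        (1 / (2 * π * (1 / n)) +
          ∫ x in Ioi (0:ℝ), Real.sin (π * (1 / n) * x) / (Real.exp (2 * π * Real.sqrt x) - 1))
      - (1 / (2 * π * n) +
          ∫ x in Ioi (0:ℝ), Real.sin (π * n * x) / (Real.exp (2 * π * Real.sqrt x) - 1)) := by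
  have hn0 : (n : ℂ) ≠ 0 := by exact_mod_cast hn.ne'
  have hpi : (π : ℂ) ≠ 0 := by exact_mod_cast Real.pi_ne_zero
  have h := K0_limit_eq n hn
  have e : (Complex.I / n : ℂ) = -((-(1 / n) : ℝ) : ℂ) * Complex.I := by push_cast; ring
  have h2 : K0 (Complex.I / n) = K0 (-((-(1 / n) : ℝ) : ℂ) * Complex.I) := by rw [← e]
  rw [w_eq n hn, h2, K0_bdry, K0_bdry] at h
  have ec : ∀ x : ℝ, Real.cos (π * (-(1 / n)) * x) = Real.cos (π * (1 / n) * x) := by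
    intro x; rw [show π * (-(1 / n)) * x = -(π * (1 / n) * x) by ring, Real.cos_neg]
  have es : ∀ x : ℝ, Real.sin (π * (-(1 / n)) * x) = -Real.sin (π * (1 / n) * x) := by
    intro x; rw [show π * (-(1 / n)) * x = -(π * (1 / n) * x) by ring, Real.sin_neg]
  simp only [ec, es, neg_div] at h
  rw [integral_neg] at h
  generalize (∫ x in Ioi (0:ℝ), Real.cos (π * n * x) / (Real.exp (2 * π * Real.sqrt x) - 1)) = C at h ⊢
  generalize (∫ x in Ioi (0:ℝ), Real.sin (π * n * x) / (Real.exp (2 * π * Real.sqrt x) - 1)) = S at h ⊢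
  generalize (∫ x in Ioi (0:ℝ), Real.cos (π * (1 / n) * x) / (Real.exp (2 * π * Real.sqrt x) - 1)) = C' at h
  generalize (∫ x in Ioi (0:ℝ), Real.sin (π * (1 / n) * x) / (Real.exp (2 * π * Real.sqrt x) - 1)) = S' at h ⊢
  generalize Real.sqrt (2 / n) = r at h ⊢
  have h3 : (C : ℂ) + (S : ℂ) * Complex.I =
      ((r / (4 * π) + (r / (2 * n)) * (S' - C') : ℝ) : ℂ)
      + ((r / (4 * π) - 1 / (2 * π * n) + (r / (2 * n)) * (C' + S') : ℝ) : ℂ) * Complex.I := by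
    rw [h]
    push_cast
    field_simp
    ring_nf
    simp only [show Complex.I ^ 3 = -Complex.I by rw [pow_succ, Complex.I_sq]; ring, Complex.I_sq]
    ring
  have hre := congrArg Complex.re h3
  have him := congrArg Complex.im h3
  simp only [Complex.add_re, Complex.add_im, Complex.ofReal_re, Complex.ofReal_im, Complex.re_ofReal_mul,
    Complex.im_ofReal_mul, Complex.I_re, Complex.I_im, mul_zero, mul_one, add_zero, zero_add] at hre him
  rw [hre, him]
  have := Real.pi_pos
  field_simp
  ring
end

section
/- For every positive real number n, Υ(n) = (1/n)·√(2/n)·R_C(0, 1/n) + R_C(0, n), where Υ(n) = 1/(2πn) + ∫_0^∞ sin(πnx)/(exp(2π√x) − 1) dx and R_C(0,n) = ∫_0^∞ cos(πnx)/(exp(2π√x) − 1) dx. -/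
open MeasureTheory Real Set

lemma rsr_laplace_sin (a k : ℝ) (hk : 0 < k) :
    ∫ u in Ioi (0:ℝ), Real.sin (a * u) * Real.exp (-k * u) = a / (a ^ 2 + k ^ 2) := by
  have hre : (-(k:ℂ) + a * Complex.I).re < 0 := by simp [hk]
  have h := integral_exp_mul_complex_Ioi hre 0
  have hi := integrableOn_exp_mul_complex_Ioi hre 0
  have h2 := integral_im hi
  have h3 : ∀ u : ℝ, RCLike.im (Complex.exp ((-(k:ℂ) + a * Complex.I) * u))
      = Real.sin (a * u) * Real.exp (-k * u) := by
    intro u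
    have : (-(k:ℂ) + a * Complex.I) * u = ((-k * u : ℝ):ℂ) + ((a * u : ℝ):ℂ) * Complex.I := by
      push_cast; ring
    rw [this]
    simp [Complex.exp_im]
    ring
  simp_rw [h3] at h2
  rw [h2, h]
  simp [Complex.div_im, Complex.normSq_apply]
  field_simp
  ring_nf

lemma rsr_exp_sub_one (u : ℝ) (hu : 0 ≤ u) :
    2 * π * u * Real.exp (π * u) ≤ Real.exp (2 * π * u) - 1 := by
  have h := Real.self_le_sinh_iff.2 (by positivity : 0 ≤ π * u)
  rw [Real.sinh_eq] at h
  have e : Real.exp (2 * π * u) = Real.exp (π * u) * Real.exp (π * u) := by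
    rw [← Real.exp_add]; ring_nf
  have e2 : Real.exp (-(π * u)) * Real.exp (π * u) = 1 := by
    rw [← Real.exp_add]; simp
  have := mul_le_mul_of_nonneg_right h (Real.exp_pos (π * u)).le
  rw [e]
  nlinarith

lemma rsr_pos (u : ℝ) (hu : 0 < u) : 0 < Real.exp (2 * π * u) - 1 := by
  have := rsr_exp_sub_one u hu.le
  have : 0 < 2 * π * u * Real.exp (π * u) := by positivity
  linarith

lemma rsr_bound (u : ℝ) (hu : 0 < u) :
    u / (Real.exp (2 * π * u) - 1) ≤ 1 / (2 * π) * Real.exp (-π * u) := by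
  rw [div_le_iff₀ (rsr_pos u hu)]
  have := rsr_exp_sub_one u hu.le
  have e2 : Real.exp (-π * u) * Real.exp (π * u) = 1 := by
    rw [← Real.exp_add]; simp
  have h := mul_le_mul_of_nonneg_left this (by positivity : 0 ≤ 1 / (2 * π) * Real.exp (-π * u))
  refine le_trans (le_of_eq ?_) h
  field_simp
  rw [mul_comm, neg_mul] at *
  rw [mul_comm (rexp _)] 
  simp [← Real.exp_add]

lemma rsr_meas : Measurable (fun u : ℝ => u / (Real.exp (2 * π * u) - 1)) := by fun_prop

lemma rsr_integrable : IntegrableOn (fun u : ℝ => u / (Real.exp (2 * π * u) - 1)) (Ioi 0) := by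
  have h := (exp_neg_integrableOn_Ioi 0 Real.pi_pos).const_mul (1 / (2 * π))
  refine h.mono' rsr_meas.aestronglyMeasurable ?_
  filter_upwards [ae_restrict_mem measurableSet_Ioi] with u hu
  have hu : 0 < u := hu
  rw [Real.norm_of_nonneg (div_nonneg hu.le (rsr_pos u hu).le)]
  exact rsr_bound u hu

lemma rsr_hasSum_geom (u : ℝ) (hu : 0 < u) :
    HasSum (fun k : ℕ => Real.exp (-(2 * π * (k + 1)) * u)) (1 / (Real.exp (2 * π * u) - 1)) := by
  have h1 : Real.exp (-(2 * π * u)) < 1 := by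
    rw [Real.exp_lt_one_iff]; have : 0 < 2 * π * u := by positivity
    linarith
  have h := (hasSum_geometric_of_lt_one (Real.exp_pos _).le h1).mul_left (Real.exp (-(2 * π * u)))
  have e1 : (fun k : ℕ => Real.exp (-(2 * π * (k + 1)) * u)) =
      fun k : ℕ => Real.exp (-(2 * π * u)) * Real.exp (-(2 * π * u)) ^ k := by
    funext k
    rw [← Real.exp_nat_mul, ← Real.exp_add]; ring_nf
  have e2 : 1 / (Real.exp (2 * π * u) - 1) =
      Real.exp (-(2 * π * u)) * (1 - Real.exp (-(2 * π * u)))⁻¹ := by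
    have h2 := rsr_pos u hu
    rw [Real.exp_neg]
    have h3 := Real.exp_pos (2 * π * u)
    generalize Real.exp (2 * π * u) = E at *
    have : 1 - E⁻¹ = (E - 1) / E := by field_simp
    rw [this]
    field_simp
  rw [e1, e2]
  exact h

lemma rsr_coth (t : ℝ) (ht : 0 < t) :
    ∑' k : ℕ, (2 * π * t) / ((2 * π * t) ^ 2 + (2 * π * (k + 1)) ^ 2) =
      1 / 4 + 1 / (2 * (Real.exp (2 * π * t) - 1)) - 1 / (4 * π * t) := by
  have hmem := UpperHalfPlane.coe_mem_integerComplement ⟨Complex.I * t, by simpa using ht⟩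
  have h := cot_series_rep' hmem
  simp only at h
  rw [Complex.cot_pi_eq_exp_ratio] at h
  have e1 : Complex.exp (2 * π * Complex.I * (Complex.I * t)) = ((Real.exp (-(2 * π * t)) : ℝ) : ℂ) := by
    push_cast
    congr 1
    ring_nf; simp
  have e2 : ∀ k : ℕ, 1 / (Complex.I * t - (k + 1)) + 1 / (Complex.I * t + (k + 1)) =
     (-4 * π * Complex.I) * (((2 * π * t) / ((2 * π * t) ^ 2 + (2 * π * (k + 1)) ^ 2) : ℝ) : ℂ) := by
    intro k
    have hp : ((t:ℂ) ^ 2 + (k + 1) ^ 2) ≠ 0 := by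
      have : (0:ℝ) < t ^ 2 + (k + 1) ^ 2 := by positivity
      exact_mod_cast this.ne'
    have a1 : Complex.I * t - (k + 1) ≠ 0 := by
      intro h; have := congrArg Complex.im h; simp at this; exact ht.ne' this
    have a2 : Complex.I * t + (k + 1) ≠ 0 := by
      intro h; have := congrArg Complex.im h; simp at this; exact ht.ne' this
    have hpi : (π:ℂ) ≠ 0 := by exact_mod_cast Real.pi_ne_zero
    have a3 : (2 * (π:ℂ) * t) ^ 2 + (2 * π * (k + 1)) ^ 2 ≠ 0 := by
      have : (2 * (π:ℂ) * t) ^ 2 + (2 * π * (k + 1)) ^ 2 = 4 * π ^ 2 * ((t:ℂ) ^ 2 + (k + 1) ^ 2) := by ring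
      rw [this]; simp [hpi, hp]
    push_cast
    field_simp
    ring_nf
    simp [show Complex.I ^ 3 = -Complex.I by rw [pow_succ, Complex.I_sq]; ring]
  rw [e1] at h
  simp_rw [e2] at h
  rw [tsum_mul_left, ← Complex.ofReal_tsum] at h
  have hc : (((1 / 4 + 1 / (2 * (Real.exp (2 * π * t) - 1)) - 1 / (4 * π * t) : ℝ)) : ℂ) * (-4 * π * Complex.I) =
     ↑π * ((((rexp (-(2 * π * t)):ℝ):ℂ) + 1) / (Complex.I * (1 - ((rexp (-(2 * π * t)) : ℝ) : ℂ)))) - 1 / (Complex.I * ↑t) := by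
    have hp := rsr_pos t ht
    rw [Real.exp_neg]
    have hpi : (π:ℂ) ≠ 0 := by exact_mod_cast Real.pi_ne_zero
    have htt : (t:ℂ) ≠ 0 := by exact_mod_cast ht.ne'
    generalize Real.exp (2 * π * t) = E at *
    have hE : ((E:ℂ) - 1) ≠ 0 := by exact_mod_cast hp.ne'
    have hE0 : (E:ℂ) ≠ 0 := by exact_mod_cast (by linarith : 0 < E).ne'
    have : (1 - (E:ℂ)⁻¹) = (E - 1) / E := by field_simp
    push_cast
    rw [this]
    field_simp
    ring_nf
    simp [Complex.I_sq]
    ring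
  rw [← hc, mul_comm] at h
  have hpi : (-4 * (π:ℂ) * Complex.I) ≠ 0 := by simp [Real.pi_ne_zero]
  have := mul_left_cancel₀ hpi h
  exact_mod_cast this.symm

lemma rsr_integral_id_mul_exp (k : ℝ) (hk : 0 < k) :
    IntegrableOn (fun u : ℝ => u * Real.exp (-k * u)) (Ioi 0) ∧
    ∫ u in Ioi (0:ℝ), u * Real.exp (-k * u) = 1 / k ^ 2 := by
  constructor
  · have := integrableOn_rpow_mul_exp_neg_mul_rpow (s := 1) (p := 1) (by norm_num) (by norm_num) hk
    simpa using this
  · have := Real.integral_rpow_mul_exp_neg_mul_Ioi (a := 2) (r := k) (by norm_num) hk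
    norm_num at this
    simpa using this

lemma rsr_binet (t : ℝ) (ht : 0 < t) :
    ∫ u in Ioi (0:ℝ), Real.sin (2 * π * t * u) / (Real.exp (2 * π * u) - 1) =
      1 / 4 + 1 / (2 * (Real.exp (2 * π * t) - 1)) - 1 / (4 * π * t) := by
  rw [← rsr_coth t ht]
  have hk : ∀ k : ℕ, 0 < 2 * π * ((k:ℝ) + 1) := fun k => by positivity
  have hb : ∀ k : ℕ, ∀ u ∈ Ioi (0:ℝ), ‖Real.sin (2 * π * t * u) * Real.exp (-(2 * π * (k + 1)) * u)‖
      ≤ (2 * π * t) * (u * Real.exp (-(2 * π * ((k:ℝ) + 1)) * u)) := by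
    intro k u hu
    have hu : 0 < u := hu
    rw [norm_mul, Real.norm_of_nonneg (Real.exp_pos _).le, ← mul_assoc]
    gcongr
    have := Real.abs_sin_le_abs (x := 2 * π * t * u)
    rwa [abs_of_pos (by positivity : 0 < 2 * π * t * u)] at this
  have hint : ∀ k : ℕ, IntegrableOn (fun u => Real.sin (2 * π * t * u) * Real.exp (-(2 * π * ((k:ℝ) + 1)) * u)) (Ioi 0) := by
    intro k
    refine (((rsr_integral_id_mul_exp _ (hk k)).1).const_mul (2 * π * t)).mono' (by fun_prop) ?_
    filter_upwards [ae_restrict_mem measurableSet_Ioi] with u hu using hb k u hu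
  have hsm : Summable fun k : ℕ => ∫ u in Ioi (0:ℝ),
      ‖Real.sin (2 * π * t * u) * Real.exp (-(2 * π * ((k:ℝ) + 1)) * u)‖ := by
    have hS : Summable fun k : ℕ => (2 * π * t) * (1 / (2 * π * ((k:ℝ) + 1)) ^ 2) := by
      have h0 := (summable_nat_add_iff 1).2 (Real.summable_one_div_nat_pow.2 one_lt_two)
      refine (h0.mul_left (2 * π * t / (2 * π) ^ 2)).congr ?_
      intro k
      push_cast
      field_simp
    refine Summable.of_nonneg_of_le (fun k => integral_nonneg fun u => norm_nonneg _) ?_ hS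
    intro k
    rw [← (rsr_integral_id_mul_exp _ (hk k)).2, ← integral_const_mul]
    exact setIntegral_mono_on (hint k).norm
      (((rsr_integral_id_mul_exp _ (hk k)).1).const_mul (2 * π * t)) measurableSet_Ioi (hb k)
  have hs := (hasSum_integral_of_summable_integral_norm hint hsm).tsum_eq
  simp_rw [fun k : ℕ => rsr_laplace_sin (2 * π * t) _ (hk k)] at hs
  rw [hs]
  refine setIntegral_congr_fun measurableSet_Ioi fun u hu => ?_
  rw [((rsr_hasSum_geom u hu).mul_left _).tsum_eq, mul_one_div]

lemma rsr_half {f : ℝ → ℂ} (hf : Integrable f) (he : ∀ x, f (-x) = f x) :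
    ∫ x in Ioi (0:ℝ), f x = (∫ x, f x) / 2 := by
  have h := intervalIntegral.integral_Iic_add_Ioi (b := 0) hf.integrableOn hf.integrableOn
  have h2 := integral_comp_neg_Ioi 0 f
  simp only [he, neg_zero] at h2
  rw [← h, ← h2]; ring

lemma rsr_gauss_cos (b : ℂ) (hb : 0 < b.re) (a : ℝ) :
    ∫ x : ℝ, Complex.cos (a * x) * Complex.exp (-b * x ^ 2) =
      (π / b) ^ (1 / 2 : ℂ) * Complex.exp (-a ^ 2 / (4 * b)) := by
  have hi : ∀ c : ℝ, Integrable fun x : ℝ => Complex.exp (Complex.I * c * x) * Complex.exp (-b * x ^ 2) := by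
    intro c
    refine (integrable_cexp_neg_mul_sq hb).bdd_mul (c := 1) (by fun_prop) ?_
    filter_upwards with x
    rw [show Complex.I * c * x = ((c * x : ℝ) : ℂ) * Complex.I by push_cast; ring,
      Complex.norm_exp_ofReal_mul_I]
  have h1 := fourierIntegral_gaussian hb a
  have h2 := fourierIntegral_gaussian hb ((-a : ℝ) : ℂ)
  have e : ∀ x : ℝ, Complex.cos (a * x) * Complex.exp (-b * x ^ 2) =
     (1/2) * (Complex.exp (Complex.I * a * x) * Complex.exp (-b * x ^ 2) +
      Complex.exp (Complex.I * (-a:ℝ) * x) * Complex.exp (-b * x ^ 2)) := by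
    intro x
    rw [Complex.cos]; push_cast; ring_nf
  simp_rw [e]
  rw [integral_const_mul, integral_add (hi a) (hi (-a)), h1, h2]
  push_cast; ring_nf

lemma rsr_norm_sin (y : ℝ) : ‖Complex.sin (y:ℂ)‖ ≤ 1 := by
  rw [← Complex.ofReal_sin, Complex.norm_real]; exact Real.abs_sin_le_one y
lemma rsr_norm_cos (y : ℝ) : ‖Complex.cos (y:ℂ)‖ ≤ 1 := by
  rw [← Complex.ofReal_cos, Complex.norm_real]; exact Real.abs_cos_le_one y

lemma rsr_gauss_sin (b : ℂ) (hb : 0 < b.re) (a : ℝ) :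
    ∫ x in Ioi (0:ℝ), Complex.sin (a * x) * (x * Complex.exp (-b * x ^ 2)) =
      a / (4 * b) * ((π / b) ^ (1 / 2 : ℂ) * Complex.exp (-a ^ 2 / (4 * b))) := by
  have hb0 : b ≠ 0 := by rintro rfl; simp at hb
  have hs : ∀ {g : ℝ → ℂ}, Integrable g → Integrable fun x : ℝ => Complex.sin (a * x) * g x := by
    intro g hg
    refine hg.bdd_mul (c := 1) (by fun_prop) ?_
    filter_upwards with x
    exact_mod_cast rsr_norm_sin (a * x)
  have hc : ∀ {g : ℝ → ℂ}, Integrable g → Integrable fun x : ℝ => (a * Complex.cos (a * x)) * g x := by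
    intro g hg
    have : Integrable fun x : ℝ => Complex.cos (a * x) * g x := by
      refine hg.bdd_mul (c := 1) (by fun_prop) ?_
      filter_upwards with x
      exact_mod_cast rsr_norm_cos (a * x)
    simpa [mul_assoc] using this.const_mul (a:ℂ)
  have hg := integrable_mul_cexp_neg_mul_sq hb
  have hg0 := (integrable_cexp_neg_mul_sq hb).const_mul (-(2 * b)⁻¹)
  rw [rsr_half (hs hg) (by intro x; push_cast; rw [mul_neg, Complex.sin_neg]; ring_nf)]
  have hu : ∀ x : ℝ, HasDerivAt (fun x : ℝ => Complex.sin (a * x)) (a * Complex.cos (a * x)) x := by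
    intro x
    have := ((hasDerivAt_id (x:ℂ)).const_mul (a:ℂ)).csin.comp_ofReal
    simpa [mul_comm] using this
  have hv : ∀ x : ℝ, HasDerivAt (fun x : ℝ => -(2 * b)⁻¹ * Complex.exp (-b * x ^ 2)) (x * Complex.exp (-b * x ^ 2)) x := by
    intro x
    have := ((((hasDerivAt_pow 2 (x:ℂ)).const_mul (-b)).cexp).const_mul (-(2 * b)⁻¹)).comp_ofReal
    convert this using 1
    field_simp
    norm_num
    ring
  have key := integral_mul_deriv_eq_deriv_mul_of_integrable (fun x _ => hu x) (fun x _ => hv x) (hs hg) (hc hg0) (hs hg0)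
  rw [key]
  have e : ∀ x : ℝ, a * Complex.cos (a * x) * (-(2 * b)⁻¹ * Complex.exp (-b * x ^ 2)) =
     (-(a * (2 * b)⁻¹)) * (Complex.cos (a * x) * Complex.exp (-b * x ^ 2)) := by intro x; ring
  simp_rw [e]
  rw [integral_const_mul, rsr_gauss_cos b hb]
  field_simp
  ring
noncomputable def rsrF (s : ℂ) : ℂ :=
  ∫ t in Ioi (0:ℝ), ((2 * (t / (Real.exp (2 * π * t) - 1)) : ℝ) : ℂ) * Complex.exp (-(π * s) * t ^ 2)

lemma rsr_fubini (s : ℂ) (hs : 0 < s.re) :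
    Integrable (Function.uncurry fun t u : ℝ =>
      ((Real.sin (2 * π * t * u) / (Real.exp (2 * π * u) - 1) : ℝ) : ℂ) *
        (t * Complex.exp (-(π * s) * t ^ 2)))
      ((volume.restrict (Ioi (0:ℝ))).prod (volume.restrict (Ioi (0:ℝ)))) := by
  have hb : 0 < π * s.re := by positivity
  have h1 : IntegrableOn (fun t : ℝ => t ^ (2:ℝ) * Real.exp (-(π * s.re) * t ^ 2)) (Ioi 0) :=
    integrableOn_rpow_mul_exp_neg_mul_sq hb (by norm_num)
  have h2 := (Integrable.mul_prod h1 rsr_integrable).const_mul (2 * π)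
  refine h2.mono' (Measurable.aestronglyMeasurable (by fun_prop)) ?_
  rw [Measure.prod_restrict]
  filter_upwards [ae_restrict_mem (measurableSet_Ioi.prod measurableSet_Ioi)] with z hz
  obtain ⟨t, u⟩ := z
  have ht : 0 < t := hz.1
  have hu : 0 < u := hz.2
  have hp := rsr_pos u hu
  simp only [Function.uncurry]
  rw [norm_mul, norm_mul, norm_cexp_neg_mul_sq, Complex.norm_real, Complex.norm_real, norm_div,
    Real.norm_of_nonneg hp.le, Real.norm_of_nonneg ht.le]
  have hsin := Real.abs_sin_le_abs (x := 2 * π * t * u)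
  rw [abs_of_pos (by positivity : 0 < 2 * π * t * u)] at hsin
  have hre : ((π:ℂ) * s).re = π * s.re := by simp
  rw [hre, Real.norm_eq_abs]
  calc _ ≤ (2 * π * t * u) / (Real.exp (2 * π * u) - 1) * (t * Real.exp (-(π * s.re) * t ^ 2)) := by
        gcongr
    _ = _ := by
        rw [Real.rpow_two]; ring

lemma rsr_functional (s : ℂ) (hs : 0 < s.re) :
    rsrF s = 1 / (2 * π) * (1 / s) ^ (1 / 2 : ℂ) - 1 / (2 * π * s)
      + (1 / s) ^ (1 / 2 : ℂ) / s * rsrF (1 / s) := by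
  have hs0 : s ≠ 0 := by rintro rfl; simp at hs
  have hpi : (π:ℂ) ≠ 0 := by exact_mod_cast Real.pi_ne_zero
  have hb : 0 < ((π:ℂ) * s).re := by simp; positivity
  have hw : (π:ℂ) / (π * s) = 1 / s := by field_simp
  set G : ℝ → ℝ → ℂ := fun t u : ℝ =>
      ((Real.sin (2 * π * t * u) / (Real.exp (2 * π * u) - 1) : ℝ) : ℂ) *
        (t * Complex.exp (-(π * s) * t ^ 2)) with hG
  have hf := rsr_fubini s hs
  have hswap := integral_integral_swap hf
  have hint3 := hf.integral_prod_left
  have hI1 := integral_gaussian_complex_Ioi hb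
  have hI2 := integral_mul_cexp_neg_mul_sq hb
  have hi1 := (integrable_cexp_neg_mul_sq hb).integrableOn (s := Ioi 0)
  have hi2 := (integrable_mul_cexp_neg_mul_sq hb).integrableOn (s := Ioi 0)
  have e : rsrF s = ∫ t in Ioi (0:ℝ), (((1 / π : ℂ) * Complex.exp (-(π * s) * t ^ 2) -
      t * Complex.exp (-(π * s) * t ^ 2)) + 4 * ∫ u in Ioi (0:ℝ), G t u) := by
    refine setIntegral_congr_fun measurableSet_Ioi fun t ht => ?_
    have ht : 0 < t := ht
    have htc : (t:ℂ) ≠ 0 := by exact_mod_cast ht.ne'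
    simp only [hG]
    rw [integral_mul_const, integral_complex_ofReal, rsr_binet t ht]
    have hp := rsr_pos t ht
    generalize Real.exp (2 * π * t) = E at *
    have hE : ((E:ℂ) - 1) ≠ 0 := by exact_mod_cast hp.ne'
    push_cast
    field_simp
    ring
  have hin : ∀ u : ℝ, ∫ t in Ioi (0:ℝ), G t u = ((1 / s) ^ (1 / 2 : ℂ) / s / 4) *
     (((2 * (u / (Real.exp (2 * π * u) - 1)) : ℝ) : ℂ) * Complex.exp (-(π * (1 / s)) * u ^ 2)) := by
    intro u
    have h := rsr_gauss_sin (π * s) hb (2 * π * u)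
    have e2 : ∀ t : ℝ, G t u = (1 / (Real.exp (2 * π * u) - 1) : ℝ) *
       (Complex.sin (((2 * π * u : ℝ):ℂ) * t) * (t * Complex.exp (-(π * s) * t ^ 2))) := by
      intro t
      simp only [hG]
      rw [show 2 * π * t * u = (2 * π * u) * t by ring]
      push_cast
      ring
    simp_rw [e2]
    rw [integral_const_mul, h, hw]
    have e3 : -((2 * π * u : ℝ):ℂ) ^ 2 / (4 * (π * s)) = -(π * (1 / s)) * u ^ 2 := by
      push_cast; field_simp; ring
    rw [e3]
    push_cast
    field_simp
  have hA : Integrable (fun t : ℝ => (1 / π : ℂ) * Complex.exp (-(π * s) * t ^ 2))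
      (volume.restrict (Ioi 0)) := hi1.const_mul _
  have hB : Integrable (fun t : ℝ => (1 / π : ℂ) * Complex.exp (-(π * s) * t ^ 2) -
      t * Complex.exp (-(π * s) * t ^ 2)) (volume.restrict (Ioi 0)) := hA.sub hi2
  have hC : Integrable (fun t : ℝ => 4 * ∫ u in Ioi (0:ℝ), G t u)
      (volume.restrict (Ioi 0)) := hint3.const_mul 4
  rw [e, integral_add hB hC, integral_sub hA hi2, integral_const_mul, integral_const_mul, hI1, hI2]
  have hsw2 : ∫ t in Ioi (0:ℝ), ∫ u in Ioi (0:ℝ), G t u =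
    ((1 / s) ^ (1 / 2 : ℂ) / s / 4) * rsrF (1 / s) := by
    have hsw : ∫ t in Ioi (0:ℝ), ∫ u in Ioi (0:ℝ), G t u =
      ∫ u in Ioi (0:ℝ), ∫ t in Ioi (0:ℝ), G t u := hswap
    rw [hsw]; simp_rw [hin]; rw [integral_const_mul]; rfl
  rw [hsw2]
  rw [hw]
  field_simp
  try ring

lemma rsr_norm_le (s : ℂ) (hs : 0 ≤ s.re) (t : ℝ) (ht : 0 < t) :
    ‖((2 * (t / (Real.exp (2 * π * t) - 1)) : ℝ) : ℂ) * Complex.exp (-(π * s) * t ^ 2)‖ ≤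
      2 * (t / (Real.exp (2 * π * t) - 1)) := by
  have hp := rsr_pos t ht
  have h0 : 0 ≤ 2 * (t / (Real.exp (2 * π * t) - 1)) := by positivity
  rw [norm_mul, norm_cexp_neg_mul_sq, Complex.norm_real, Real.norm_of_nonneg h0]
  refine mul_le_of_le_one_right h0 ?_
  rw [Real.exp_le_one_iff]
  have : 0 ≤ ((π:ℂ) * s).re := by simp; positivity
  nlinarith [sq_nonneg t]

lemma rsr_integrableF (s : ℂ) (hs : 0 ≤ s.re) : IntegrableOn (fun t : ℝ =>
    ((2 * (t / (Real.exp (2 * π * t) - 1)) : ℝ) : ℂ) * Complex.exp (-(π * s) * t ^ 2)) (Ioi 0) := by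
  refine (rsr_integrable.const_mul 2).mono' (Measurable.aestronglyMeasurable (by fun_prop)) ?_
  filter_upwards [ae_restrict_mem measurableSet_Ioi] with u hu using rsr_norm_le s hs u hu

lemma rsr_cont (s₀ : ℂ) : ContinuousWithinAt rsrF {s : ℂ | 0 ≤ s.re} s₀ := by
  unfold rsrF
  refine continuousWithinAt_of_dominated (bound := fun t => 2 * (t / (Real.exp (2 * π * t) - 1))) ?_ ?_
    (rsr_integrable.const_mul 2) ?_
  · filter_upwards with s
    exact Measurable.aestronglyMeasurable (by fun_prop)
  · filter_upwards [self_mem_nhdsWithin] with s hs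
    filter_upwards [ae_restrict_mem measurableSet_Ioi] with u hu using rsr_norm_le s hs u hu
  · filter_upwards with t
    fun_prop

lemma rsr_functional_imag (n : ℝ) (hn : 0 < n) (s₀ : ℂ) (h0 : s₀ = -(n * Complex.I)) :
    rsrF s₀ = 1 / (2 * π) * (1 / s₀) ^ (1 / 2 : ℂ) - 1 / (2 * π * s₀)
      + (1 / s₀) ^ (1 / 2 : ℂ) / s₀ * rsrF (1 / s₀) := by
  have hs0 : s₀ ≠ 0 := by rw [h0]; simp [hn.ne']
  have hpi : (π:ℂ) ≠ 0 := by exact_mod_cast Real.pi_ne_zero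
  set P : Set ℂ := {s : ℂ | 0 < s.re} with hP
  have hne : (nhdsWithin s₀ P).NeBot := by
    rw [← mem_closure_iff_nhdsWithin_neBot, hP, Complex.closure_setOfPred_lt_re]
    simp [h0]
  have hinv : ContinuousWithinAt (fun s : ℂ => 1 / s) P s₀ :=
    (continuousAt_const.div continuousAt_id hs0).continuousWithinAt
  have hF1 : ContinuousWithinAt rsrF P s₀ := (rsr_cont s₀).mono fun s hs => le_of_lt (show 0 < s.re from hs)
  have hF2 : ContinuousWithinAt (fun s => rsrF (1 / s)) P s₀ := by
    refine ContinuousWithinAt.comp (t := {s : ℂ | 0 ≤ s.re}) (f := fun s : ℂ => 1 / s) (rsr_cont (1 / s₀)) hinv ?_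
    intro s hs
    have hs : 0 < s.re := hs
    show 0 ≤ (1 / s).re
    rw [one_div, Complex.inv_re]
    exact div_nonneg hs.le (Complex.normSq_nonneg s)
  have hw : ContinuousWithinAt (fun s : ℂ => (1 / s) ^ (1 / 2 : ℂ)) P s₀ := by
    refine hinv.cpow continuousWithinAt_const ?_
    right
    simp [h0, hn.ne', Complex.inv_im]
  have hid : ContinuousWithinAt (fun s : ℂ => s) P s₀ := continuousWithinAt_id
  have hR : ContinuousWithinAt (fun s => 1 / (2 * π) * (1 / s) ^ (1 / 2 : ℂ) - 1 / (2 * π * s)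
      + (1 / s) ^ (1 / 2 : ℂ) / s * rsrF (1 / s)) P s₀ := by
    refine ((continuousWithinAt_const.mul hw).sub ?_).add ((hw.div hid hs0).mul hF2)
    exact continuousWithinAt_const.div (continuousWithinAt_const.mul hid) (by simp [hpi, hs0])
  refine tendsto_nhds_unique hF1 (hR.tendsto.congr' ?_)
  filter_upwards [self_mem_nhdsWithin] with s hs
  exact (rsr_functional s hs).symm

lemma rsr_subst (g : ℝ → ℝ) : ∫ x in Ioi (0:ℝ), g x / (Real.exp (2 * π * Real.sqrt x) - 1) =
    ∫ t in Ioi (0:ℝ), 2 * (t / (Real.exp (2 * π * t) - 1)) * g (t ^ 2) := by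
  rw [← integral_comp_rpow_Ioi_of_pos (g := fun x => g x / (Real.exp (2 * π * Real.sqrt x) - 1)) two_pos]
  refine setIntegral_congr_fun measurableSet_Ioi fun t ht => ?_
  have ht : 0 < t := ht
  simp only [smul_eq_mul, Real.rpow_two]
  rw [Real.sqrt_sq ht.le, show (2:ℝ) - 1 = 1 by norm_num, Real.rpow_one]
  ring

lemma rsr_imag (c : ℝ) : rsrF (c * Complex.I) =
    ((∫ x in Ioi (0:ℝ), Real.cos (π * c * x) / (Real.exp (2 * π * Real.sqrt x) - 1) : ℝ) : ℂ) -
    ((∫ x in Ioi (0:ℝ), Real.sin (π * c * x) / (Real.exp (2 * π * Real.sqrt x) - 1) : ℝ) : ℂ) * Complex.I := by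
  rw [rsr_subst (fun x => Real.cos (π * c * x)), rsr_subst (fun x => Real.sin (π * c * x))]
  have hI := rsr_integrableF (c * Complex.I) (by simp)
  have e : ∀ t : ℝ, Complex.exp (-(π * (c * Complex.I)) * t ^ 2) =
      ((Real.cos (π * c * t ^ 2) : ℝ) : ℂ) - ((Real.sin (π * c * t ^ 2) : ℝ) : ℂ) * Complex.I := by
    intro t
    rw [show -(π * ((c:ℂ) * Complex.I)) * t ^ 2 = ((-(π * c * t ^ 2) : ℝ) : ℂ) * Complex.I by push_cast; ring,
      Complex.exp_mul_I, ← Complex.ofReal_cos, ← Complex.ofReal_sin, Real.cos_neg, Real.sin_neg]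
    push_cast; ring
  have h1 : (rsrF (c * Complex.I)).re = _ := (integral_re hI).symm
  have h2 : (rsrF (c * Complex.I)).im = _ := (integral_im hI).symm
  apply Complex.ext
  · rw [h1]
    simp only [Complex.sub_re, Complex.mul_re, Complex.ofReal_re, Complex.ofReal_im,
      Complex.I_re, Complex.I_im, mul_zero, zero_mul, sub_zero]
    congr 1
    funext t
    rw [e t, RCLike.re_eq_complex_re, Complex.re_ofReal_mul]
    simp only [Complex.sub_re, Complex.mul_re, Complex.ofReal_re, Complex.ofReal_im,
      Complex.I_re, Complex.I_im, mul_zero, zero_mul, sub_zero]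
  · rw [h2]
    simp only [Complex.sub_im, Complex.mul_im, Complex.ofReal_re, Complex.ofReal_im,
      Complex.I_re, Complex.I_im, mul_zero, zero_mul, zero_sub, mul_one, add_zero]
    rw [← integral_neg]
    congr 1
    funext t
    rw [e t, RCLike.im_eq_complex_im, Complex.im_ofReal_mul]
    simp only [Complex.sub_im, Complex.mul_im, Complex.ofReal_re, Complex.ofReal_im,
      Complex.I_re, Complex.I_im, mul_zero, zero_mul, zero_sub, mul_one, add_zero, mul_neg]

/-- Ramanujan's reciprocity: `Υ(n) = (1/n)√(2/n) R_C(0,1/n) + R_C(0,n)`, where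
`Υ(n) = 1/(2πn) + ∫_0^∞ sin(πnx)/(e^{2π√x} − 1) dx` and
`R_C(0,n) = ∫_0^∞ cos(πnx)/(e^{2π√x} − 1) dx`. -/
theorem ramanujan_sine_reciprocity (n : ℝ) (hn : 0 < n) :
    (1 / (2 * π * n) +
        ∫ x in Ioi (0:ℝ), Real.sin (π * n * x) / (Real.exp (2 * π * Real.sqrt x) - 1)) =
      (1 / n) * Real.sqrt (2 / n) *
        (∫ x in Ioi (0:ℝ), Real.cos (π * (1 / n) * x) / (Real.exp (2 * π * Real.sqrt x) - 1))
      + (∫ x in Ioi (0:ℝ), Real.cos (π * n * x) / (Real.exp (2 * π * Real.sqrt x) - 1)) := by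
  have h := rsr_functional_imag n hn (((-n : ℝ) : ℂ) * Complex.I) (by push_cast; ring)
  have hinv : 1 / (((-n : ℝ) : ℂ) * Complex.I) = ((1 / n : ℝ) : ℂ) * Complex.I := by
    have : (n:ℂ) ≠ 0 := by exact_mod_cast hn.ne'
    push_cast
    field_simp
    simp
  have hr : Real.sqrt (2 / n) ^ 2 = 2 / n := Real.sq_sqrt (by positivity)
  have hr0 : 0 ≤ Real.sqrt (2 / n) := Real.sqrt_nonneg _
  set r := Real.sqrt (2 / n)
  have hw : (((1 / n : ℝ) : ℂ) * Complex.I) ^ (1 / 2 : ℂ) = ((r / 2 : ℝ) : ℂ) * (1 + Complex.I) := by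
    have hsq : ((1 / n : ℝ) : ℂ) * Complex.I = (((r / 2 : ℝ) : ℂ) * (1 + Complex.I)) ^ 2 := by
      have : (1 / n : ℝ) = r ^ 2 / 2 := by rw [hr]; ring
      rw [this]
      push_cast
      ring_nf
      simp
    have hrp : 0 < r := Real.sqrt_pos.2 (by positivity)
    have harg : (((r / 2 : ℝ) : ℂ) * (1 + Complex.I)).arg = π / 4 := by
      rw [Complex.arg_real_mul _ (by positivity)]
      have : (1 + Complex.I) = ((Real.sqrt 2 : ℝ) : ℂ) * (Complex.cos ((π/4 : ℝ)) + Complex.sin ((π/4 : ℝ)) * Complex.I) := by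
        rw [← Complex.ofReal_cos, ← Complex.ofReal_sin, Real.cos_pi_div_four, Real.sin_pi_div_four]
        have h2 : ((Real.sqrt 2 : ℝ) : ℂ) * ((Real.sqrt 2 : ℝ) : ℂ) = 2 := by
          rw [← Complex.ofReal_mul, Real.mul_self_sqrt (by norm_num)]; norm_num
        push_cast
        linear_combination (-(1 + Complex.I) / 2) * h2
      rw [this, Complex.arg_mul_cos_add_sin_mul_I (by positivity)]
      constructor <;> linarith [Real.pi_pos]
    rw [hsq, one_div]
    exact_mod_cast Complex.pow_cpow_nat_inv (n := 2) (by norm_num) (by rw [harg]; push_cast; linarith [Real.pi_pos]) (by rw [harg]; push_cast; linarith [Real.pi_pos])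
  rw [show 1 / (2 * (π:ℂ) * (((-n : ℝ) : ℂ) * Complex.I)) = 1 / (2 * π) * (1 / (((-n : ℝ) : ℂ) * Complex.I)) by
    rw [one_div_mul_one_div], div_eq_mul_one_div (_ ^ (1 / 2 : ℂ)), hinv, hw, rsr_imag, rsr_imag] at h
  have hc : ∀ x, Real.cos (π * -n * x) = Real.cos (π * n * x) := fun x => by
    rw [← Real.cos_neg]; ring_nf
  have hsn : ∀ x, Real.sin (π * -n * x) / (Real.exp (2 * π * Real.sqrt x) - 1) = -(Real.sin (π * n * x) / (Real.exp (2 * π * Real.sqrt x) - 1)) := fun x => by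
    rw [← neg_div, ← Real.sin_neg]; ring_nf
  simp_rw [hc, hsn] at h
  rw [integral_neg] at h
  generalize (∫ x in Ioi (0:ℝ), Real.sin (π * n * x) / (Real.exp (2 * π * Real.sqrt x) - 1)) = S at *
  generalize (∫ x in Ioi (0:ℝ), Real.cos (π * n * x) / (Real.exp (2 * π * Real.sqrt x) - 1)) = C at *
  generalize (∫ x in Ioi (0:ℝ), Real.cos (π * (1 / n) * x) / (Real.exp (2 * π * Real.sqrt x) - 1)) = C' at *
  generalize (∫ x in Ioi (0:ℝ), Real.sin (π * (1 / n) * x) / (Real.exp (2 * π * Real.sqrt x) - 1)) = S' at *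
  rw [show (1 / (2 * (π:ℂ))) = ((1 / (2 * π) : ℝ) : ℂ) by push_cast; rfl] at h
  have hre := congrArg Complex.re h
  have him := congrArg Complex.im h
  rw [show 1 / (2 * π * n) = (1 / (2 * π)) * (1 / n) by rw [one_div_mul_one_div]]
  generalize 1 / (2 * π) = q at *
  generalize 1 / n = m at *
  simp only [Complex.add_re, Complex.sub_re, Complex.mul_re, Complex.add_im, Complex.sub_im, Complex.mul_im, Complex.ofReal_re, Complex.ofReal_im, Complex.I_re, Complex.I_im, Complex.one_re, Complex.one_im] at hre him
  linear_combination him - hre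
end
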